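/- Let Ω be a bounded open convex set in ℝ² containing the origin in its interior, and suppose that sup_{θ∈S¹} sup_{δ>0} δ^{-1/2} μ(θ,δ) < ∞. Then there is a constant C_Ω such that for all R ≥ 2 and all h with 1 ≤ h ≤ R one has 𝒢_Ω(R,h) ≤ C_Ω (R log R)^{1/2}. -/

import Mathlib

/-!
Smoothing and Poisson summation.  Convolving the indicator function of `tΩ` with a Fejér-type
kernel at scale `ε ~ 1/R`, and comparing with the slightly dilated domains `(t ± 2ε/r)Ω`, bounds
`|E_Ω(t)|` by smoothed exponential sums `t² ∑_{k ≠ 0} p_ε(k) χ̂(tk)` up to a bounded error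
(`IsConvexDomain.exists_abs_dilateCount_sub_le`).  Here `χ̂` is the Fourier transform of the
indicator function of `Ω`, and the weights `p_ε(k)` are at most `min (1, (1/(ε|k|))²)`.

Along the direction `u` of `k`, Fubini turns `χ̂(tk)` into the Fourier transform at frequency
`t|k|` of the chord-length function `f` of `Ω`.  This function is supported on an interval
`[α, β]`, is concave there, and the curvature hypothesis implies that it is `O(√(s - α))` and
`O(√(β - s))` at the endpoints (`IsConvexDomain.isChordProfile`).  No smoothness is available, so
the decay is extracted from the second difference `2 f(s) - f(s - η) - f(s + η)` with `η = ε/|k|`: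
it multiplies the transform by `4 sin²(πt|k|η)`, which is at least `16 ε² t²` for `t = O(R)`.
Concavity lets its `L¹` norm be computed by telescoping: it is `O(η^{3/2})` within distance
`d = r/|k|` of the endpoints and `O(η² d^{-1/2})` in the middle.

The endpoint parts are wave packets, superpositions of `e(-tσ)` with `σ` at bounded distance from
`ρ*(k)`, respectively `-ρ*(-k)`.  Over a window of length one two such packets have an inner product
decaying like `(1 + |ρ*(k) - ρ*(l)|)^{-4}`, by comparison with a Gaussian window
(`IsWavePacket.intervalIntegral_norm_sum_sq_le`).  As `ρ*` is comparable to a norm, at most `O(|k|)`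
lattice points `l` interact with a given `k`, so the mean square of the endpoint parts is
`O(R⁴ ∑ (R|k|)^{-3} |k| min (1, R²/|k|²)) = O(R log R)`.  The middle parts are summed trivially and
contribute `O(R^{1/2})` pointwise.  Covering `[R, R + h]` by windows of length one gives the claim.
-/

open MeasureTheory Set
open scoped Pointwise RealInnerProductSpace NNReal ENNReal

noncomputable section

abbrev E2 := EuclideanSpace ℝ (Fin 2)

/-- The embedding of an integer vector into the Euclidean plane. -/
def ek (k : Fin 2 → ℤ) : E2 := (WithLp.equiv 2 (Fin 2 → ℝ)).symm fun i => (k i : ℝ)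

/-- Number of lattice points in a set. -/
def latticeCount (S : Set E2) : ℕ := Nat.card {k : Fin 2 → ℤ | ek k ∈ S}

/-- The lattice rest `E_Ω(t) = card(tΩ ∩ ℤ²) − t²·area(Ω)`. -/
def latticeRest (Ω : Set E2) (t : ℝ) : ℝ :=
  (latticeCount (t • Ω) : ℝ) - t ^ 2 * (volume Ω).toReal

/-- The mean square discrepancy `𝒢_Ω(R,h) = ((1/h)∫_R^{R+h} |E_Ω(t)|² dt)^{1/2}`. -/
def meanSquare (Ω : Set E2) (R h : ℝ) : ℝ :=
  Real.sqrt ((1 / h) * ∫ t in R..(R + h), (latticeRest Ω t) ^ 2)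

/-- The support function `ρ*(ξ) = sup {⟨x,ξ⟩ : x ∈ Ω}`. -/
def suppFn (Ω : Set E2) (ξ : E2) : ℝ := sSup ((fun x => ⟪x, ξ⟫) '' Ω)

/-- `μ(θ,δ)`, the diameter of the cap `𝒞(θ,δ) = {x ∈ ∂Ω : ⟨x,θ⟩ ≥ ρ*(θ) − δ}`. -/
def capDiam (Ω : Set E2) (θ : E2) (δ : ℝ) : ℝ :=
  Metric.diam {x ∈ frontier Ω | suppFn Ω θ - δ ≤ ⟪x, θ⟫}

/-- Curvature bounded below in the generalized sense:
`sup_{θ∈S¹} sup_{δ>0} δ^{-1/2} μ(θ,δ) < ∞`. -/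
def CurvBddBelow (Ω : Set E2) : Prop :=
  ∃ K : ℝ, ∀ θ : E2, ‖θ‖ = 1 → ∀ δ : ℝ, 0 < δ → capDiam Ω θ δ ≤ K * Real.sqrt δ

open scoped FourierTransform

/-! ### The Fourier transform on the line -/

section FourierLine

variable {f g : ℝ → ℂ}

lemma fourier_comp_add_right (f : ℝ → ℂ) (a w : ℝ) :
    𝓕 (fun s => f (s + a)) w = 𝐞 (a * w) • 𝓕 f w := by
  have := congrFun (VectorFourier.fourierIntegral_comp_add_right 𝐞 volume (innerₗ ℝ) f a) w
  rwa [innerₗ_apply_apply, Real.inner_apply] at this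

lemma continuous_fourier (hf : Integrable f) : Continuous (𝓕 f) :=
  VectorFourier.fourierIntegral_continuous Real.continuous_fourierChar continuous_inner hf

lemma norm_fourier_le (f : ℝ → ℂ) (w : ℝ) : ‖𝓕 f w‖ ≤ ∫ s, ‖f s‖ :=
  VectorFourier.norm_fourierIntegral_le_integral_norm _ _ _ _ _

lemma integral_fourier_mul_eq (hf : Integrable f) (hg : Integrable g) :
    ∫ t, 𝓕 f t * g t = ∫ σ, f σ * 𝓕 g σ := by
  have := VectorFourier.integral_fourierIntegral_smul_eq_flip (L := innerₗ ℝ)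
    Real.continuous_fourierChar continuous_inner hf hg
  rwa [flip_innerₗ] at this

lemma integrable_fourierChar_smul (hf : Integrable f) (w : ℝ) :
    Integrable fun s => 𝐞 (-(s * w)) • f s := by
  simpa only [Real.inner_apply] using (Real.fourierIntegral_convergent_iff w).2 hf

lemma fourier_fun_sub (hf : Integrable f) (hg : Integrable g) (w : ℝ) :
    𝓕 (fun s => f s - g s) w = 𝓕 f w - 𝓕 g w := by
  simp only [Real.fourier_real_eq, smul_sub]
  exact integral_sub (integrable_fourierChar_smul hf w) (integrable_fourierChar_smul hg w)

lemma fourier_const_mul (c : ℂ) (f : ℝ → ℂ) (w : ℝ) :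
    𝓕 (fun s => c * f s) w = c * 𝓕 f w := by
  simp only [Real.fourier_real_eq, ← integral_const_mul, Circle.smul_def, smul_eq_mul]
  exact integral_congr_ae (.of_forall fun s => mul_left_comm _ _ _)

lemma fourier_comp_div (f : ℝ → ℂ) {N : ℝ} (hN : 0 < N) (t : ℝ) :
    𝓕 (fun σ => (N : ℂ)⁻¹ * f (σ / N)) t = 𝓕 f (N * t) := by
  rw [fourier_const_mul, Real.fourier_real_eq, Real.fourier_real_eq]
  have hcongr : (fun σ : ℝ => 𝐞 (-(σ * t)) • f (σ / N)) =
      fun σ => (fun s : ℝ => 𝐞 (-(s * (N * t))) • f s) (σ / N) := by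
    funext σ
    simp only [← mul_assoc]
    rw [div_mul_cancel₀ _ hN.ne']
  rw [hcongr, Measure.integral_comp_div (fun s : ℝ => 𝐞 (-(s * (N * t))) • f s),
    abs_of_pos hN, Complex.real_smul, inv_mul_cancel_left₀ (by exact_mod_cast hN.ne')]

lemma two_sub_fourierChar_sub (x : ℝ) :
    (2 : ℂ) - 𝐞 (-x) - 𝐞 x = ((4 * Real.sin (Real.pi * x) ^ 2 : ℝ) : ℂ) := by
  have hcos : 2 * Complex.cos ((2 * Real.pi * x : ℝ) : ℂ) = 𝐞 x + 𝐞 (-x) := by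
    rw [Complex.two_cos, Real.fourierChar_apply, Real.fourierChar_apply]
    push_cast
    ring_nf
  rw [sub_sub, add_comm, ← hcos, ← Complex.ofReal_cos, mul_assoc, Real.cos_two_mul, Real.cos_sq']
  push_cast
  ring

end FourierLine

/-! ### Second differences of chord-length functions -/

/-- The centred second difference of `f` with step `η`, with the sign that makes it nonnegative
for concave functions. -/
def secondDiff (f : ℝ → ℝ) (η s : ℝ) : ℝ := 2 * f s - f (s - η) - f (s + η)

section SecondDiff

variable {f g : ℝ → ℝ} {η : ℝ}

lemma secondDiff_comp_neg (f : ℝ → ℝ) (η s : ℝ) :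
    secondDiff (fun s => f (-s)) η s = secondDiff f η (-s) := by
  simp only [secondDiff, neg_sub, neg_add]
  rw [show η - s = -s + η by ring, show -s + -η = -s - η by ring]
  ring

lemma integrable_secondDiff (hf : Integrable f) (η : ℝ) : Integrable (secondDiff f η) :=
  ((hf.const_mul 2).sub (hf.comp_sub_right η)).sub (hf.comp_add_right η)

lemma fourier_secondDiff (hf : Integrable f) (η w : ℝ) :
    𝓕 (fun s => (secondDiff f η s : ℂ)) w =
      ((4 * Real.sin (Real.pi * (η * w)) ^ 2 : ℝ) : ℂ) * 𝓕 (fun s => (f s : ℂ)) w := by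
  set F : ℝ → ℂ := fun s => (f s : ℂ) with hF
  have hFi : Integrable F := hf.ofReal
  have hsplit : (fun s => (secondDiff f η s : ℂ)) =
      fun s => 2 * F s - F (s + -η) - F (s + η) := by
    funext s
    simp only [secondDiff, hF, ← sub_eq_add_neg]
    push_cast
    rfl
  rw [hsplit, fourier_fun_sub (f := fun s => 2 * F s - F (s + -η)) (g := fun s => F (s + η))
      ((hFi.const_mul 2).sub (hFi.comp_add_right _)) (hFi.comp_add_right _),
    fourier_fun_sub (hFi.const_mul 2) (hFi.comp_add_right _), fourier_const_mul,
    fourier_comp_add_right, fourier_comp_add_right, ← two_sub_fourierChar_sub, neg_mul]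
  simp only [Circle.smul_def, smul_eq_mul]
  ring

lemma integral_secondDiff (hf : Integrable f) (η a b : ℝ) :
    ∫ s in a..b, secondDiff f η s =
      (∫ s in a..(a + η), (f s - f (s - η))) + ∫ s in b..(b + η), (f (s - η) - f s) := by
  have hi (x y : ℝ) : IntervalIntegrable f volume x y := hf.intervalIntegrable
  have hi_sub (x y : ℝ) : IntervalIntegrable (fun s => f (s - η)) volume x y :=
    (hf.comp_sub_right η).intervalIntegrable
  have hi_add (x y : ℝ) : IntervalIntegrable (fun s => f (s + η)) volume x y :=
    (hf.comp_add_right η).intervalIntegrable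
  simp only [secondDiff]
  rw [intervalIntegral.integral_sub (((hi a b).const_mul 2).sub (hi_sub a b)) (hi_add a b),
    intervalIntegral.integral_sub ((hi a b).const_mul 2) (hi_sub a b),
    intervalIntegral.integral_sub (hi _ _) (hi_sub _ _),
    intervalIntegral.integral_sub (hi_sub _ _) (hi _ _)]
  simp only [intervalIntegral.integral_comp_sub_right f, intervalIntegral.integral_comp_add_right f,
    intervalIntegral.integral_const_mul, add_sub_cancel_right]
  have h₁ := intervalIntegral.integral_add_adjacent_intervals (hi (a - η) a) (hi a b)
  have h₂ := intervalIntegral.integral_add_adjacent_intervals (hi (a - η) (b - η)) (hi (b - η) b)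
  have h₃ := intervalIntegral.integral_add_adjacent_intervals (hi a b) (hi b (b + η))
  have h₄ := intervalIntegral.integral_add_adjacent_intervals (hi a (a + η)) (hi (a + η) (b + η))
  linarith

lemma integral_le_length_mul {a b C : ℝ} (hg : Integrable g) (hab : a ≤ b)
    (hC : ∀ s ∈ Icc a b, g s ≤ C) : ∫ s in a..b, g s ≤ (b - a) * C := by
  simpa using intervalIntegral.integral_mono_on hab hg.intervalIntegrable
    intervalIntegrable_const hC

end SecondDiff

/-- What is used of the chord-length function of a planar convex body with curvature bounded below:
it is concave on the interior `(α, β)` of its support and vanishes at both ends at least as fast as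
a square root. As `√x = 0` for `x ≤ 0`, the two upper bounds force `f = 0` outside `(α, β)`. -/
structure IsChordProfile (f : ℝ → ℝ) (α β K : ℝ) : Prop where
  lt : α < β
  nonneg : ∀ s, 0 ≤ f s
  le_left : ∀ s, f s ≤ K * √(s - α)
  le_right : ∀ s, f s ≤ K * √(β - s)
  concaveOn : ConcaveOn ℝ (Ioo α β) f

namespace IsChordProfile

variable {f : ℝ → ℝ} {α β K η d s : ℝ}

lemma K_nonneg (h : IsChordProfile f α β K) : 0 ≤ K :=
  nonneg_of_mul_nonneg_left ((h.nonneg β).trans (h.le_left β))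
    (Real.sqrt_pos.2 (sub_pos.2 h.lt))

lemma comp_neg (h : IsChordProfile f α β K) : IsChordProfile (fun s => f (-s)) (-β) (-α) K where
  lt := neg_lt_neg h.lt
  nonneg s := h.nonneg _
  le_left s := by simpa only [sub_neg_eq_add, add_comm] using h.le_right (-s)
  le_right s := by simpa only [← neg_add', add_comm, neg_add_eq_sub] using h.le_left (-s)
  concaveOn := by
    have := h.concaveOn.comp_linearMap (-LinearMap.id)
    rwa [show ⇑(-LinearMap.id : ℝ →ₗ[ℝ] ℝ) ⁻¹' Ioo α β = Ioo (-β) (-α) from Set.neg_Ioo α β]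
      at this

lemma eq_zero_of_ge (h : IsChordProfile f α β K) (hs : β ≤ s) : f s = 0 := by
  have := h.le_right s
  rw [Real.sqrt_eq_zero_of_nonpos (sub_nonpos.2 hs), mul_zero] at this
  exact this.antisymm (h.nonneg s)

lemma eq_zero_of_le (h : IsChordProfile f α β K) (hs : s ≤ α) : f s = 0 := by
  simpa only [neg_neg] using h.comp_neg.eq_zero_of_ge (neg_le_neg hs)

lemma integrable (h : IsChordProfile f α β K) : Integrable f := by
  have hsupp : Function.support f ⊆ Ioo α β := fun s hs =>
    ⟨lt_of_not_ge fun hle => hs (h.eq_zero_of_le hle),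
      lt_of_not_ge fun hge => hs (h.eq_zero_of_ge hge)⟩
  refine (integrableOn_iff_integrable_of_support_subset hsupp).1 <|
    IntegrableOn.of_bound measure_Ioo_lt_top
      ((h.concaveOn.continuousOn isOpen_Ioo).aestronglyMeasurable measurableSet_Ioo)
      (K * √(β - α)) ?_
  · filter_upwards [ae_restrict_mem measurableSet_Ioo] with s hs
    rw [Real.norm_of_nonneg (h.nonneg s)]
    exact (h.le_right s).trans
      (mul_le_mul_of_nonneg_left (Real.sqrt_le_sqrt (by linarith [hs.1])) h.K_nonneg)

/-- Compare the slopes of the concave `f` over `[s - η, s]` and over `[(s + α) / 2, s]`. -/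
lemma sub_comp_sub_le (h : IsChordProfile f α β K) (hη : 0 < η) (hd : 2 * η ≤ d)
    (hs : d ≤ s - α) : f s - f (s - η) ≤ 2 * η * K / √d := by
  have hK := h.K_nonneg
  rcases le_or_gt β s with hβ | hβ
  · rw [h.eq_zero_of_ge hβ]
    exact (sub_nonpos.2 (h.nonneg _)).trans (by positivity)
  set D := s - α
  have hD0 : 0 < D := by linarith
  have hconc : 2 * η / D * f (s - D / 2) + (1 - 2 * η / D) * f s ≤ f (s - η) := by
    have hweight : 0 ≤ 1 - 2 * η / D := by rw [sub_nonneg, div_le_one hD0]; linarith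
    have := h.concaveOn.2 (show s - D / 2 ∈ Ioo α β from ⟨by linarith, by linarith⟩)
      (show s ∈ Ioo α β from ⟨by linarith, hβ⟩) (show 0 ≤ 2 * η / D by positivity) hweight (by ring)
    simp only [smul_eq_mul] at this
    rwa [show 2 * η / D * (s - D / 2) + (1 - 2 * η / D) * s = s - η by field_simp; ring] at this
  have hmid : 0 ≤ 2 * η / D * f (s - D / 2) := mul_nonneg (by positivity) (h.nonneg _)
  calc f s - f (s - η) ≤ 2 * η / D * f s := by linarith
    _ ≤ 2 * η / D * (K * √D) := by gcongr; exact h.le_left s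
    _ = 2 * η * K * (√D / D) := by ring
    _ = 2 * η * K / √D := by rw [Real.sqrt_div_self', mul_one_div]
    _ ≤ 2 * η * K / √d := by
        have hd0 : 0 < d := by linarith
        gcongr

lemma comp_sub_sub_le (h : IsChordProfile f α β K) (hη : 0 < η) (hd : 2 * η ≤ d)
    (hs : d ≤ β - (s - η)) : f (s - η) - f s ≤ 2 * η * K / √d := by
  have := h.comp_neg.sub_comp_sub_le (s := -(s - η)) hη hd (by linarith)
  rwa [neg_neg, show -(-(s - η) - η) = s by ring] at this

lemma secondDiff_nonneg (h : IsChordProfile f α β K) (hη : 0 < η) (hα : α < s - η)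
    (hβ : s + η < β) : 0 ≤ secondDiff f η s := by
  have := h.concaveOn.2 (show s - η ∈ Ioo α β from ⟨hα, by linarith⟩)
    (show s + η ∈ Ioo α β from ⟨by linarith, hβ⟩) one_half_pos.le one_half_pos.le (add_halves 1)
  simp only [smul_eq_mul] at this
  rw [show 1 / 2 * (s - η) + 1 / 2 * (s + η) = s by ring] at this
  unfold secondDiff
  linarith

lemma integral_abs_secondDiff_eq (h : IsChordProfile f α β K) {a b : ℝ} (hη : 0 < η) (hab : a ≤ b)
    (ha : α + η ≤ a) (hb : b ≤ β - η) :
    ∫ s in a..b, |secondDiff f η s| = (∫ s in a..(a + η), (f s - f (s - η))) +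
      ∫ s in b..(b + η), (f (s - η) - f s) := by
  rw [← integral_secondDiff h.integrable]
  refine intervalIntegral.integral_congr_Ioo_of_le hab fun s hs => ?_
  exact abs_of_nonneg (h.secondDiff_nonneg hη (by linarith [hs.1]) (by linarith [hs.2]))

lemma integral_sub_comp_sub_le (h : IsChordProfile f α β K) (hη : 0 < η) (hd : 2 * η ≤ d) {a : ℝ}
    (ha : α + d ≤ a) : ∫ s in a..(a + η), (f s - f (s - η)) ≤ 2 * K * η ^ 2 / √d := by
  have := integral_le_length_mul (h.integrable.sub (h.integrable.comp_sub_right η))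
    (le_add_of_nonneg_right hη.le) fun s hs => h.sub_comp_sub_le hη hd (by linarith [hs.1])
  exact this.trans_eq (by ring)

lemma setIntegral_abs_secondDiff_mid_le (h : IsChordProfile f α β K) (hη : 0 < η) (hd : 2 * η ≤ d)
    (hd_le : 2 * d ≤ β - α) :
    ∫ s in Icc (α + d) (β - d), |secondDiff f η s| ≤ 4 * K * η ^ 2 / √d := by
  rw [integral_Icc_eq_integral_Ioc, ← intervalIntegral.integral_of_le (by linarith),
    h.integral_abs_secondDiff_eq hη (by linarith) (by linarith) (by linarith)]
  have hleft := h.integral_sub_comp_sub_le hη hd (le_refl (α + d))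
  have hright := integral_le_length_mul ((h.integrable.comp_sub_right η).sub h.integrable)
    (le_add_of_nonneg_right hη.le) fun s (hs : s ∈ Icc (β - d) (β - d + η)) =>
      h.comp_sub_sub_le hη hd (by linarith [hs.2])
  calc _ ≤ 2 * K * η ^ 2 / √d + (β - d + η - (β - d)) * (2 * η * K / √d) := add_le_add hleft hright
    _ = _ := by ring

lemma le_of_sub_le (h : IsChordProfile f α β K) {x : ℝ} (hη : 0 ≤ η) (hx : β - x ≤ 2 * η) :
    f x ≤ 2 * K * √η := by
  have hK := h.K_nonneg
  calc f x ≤ K * √(β - x) := h.le_right x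
    _ ≤ K * √(2 ^ 2 * η) := by gcongr; linarith
    _ = 2 * K * √η := by rw [Real.sqrt_mul (by positivity), Real.sqrt_sq zero_le_two]; ring

lemma abs_secondDiff_le (h : IsChordProfile f α β K) (hη : 0 ≤ η) (hs : β - η ≤ s) :
    |secondDiff f η s| ≤ 4 * K * √η := by
  have hs₀ := h.le_of_sub_le (x := s) hη (by linarith)
  have hs₁ := h.le_of_sub_le (x := s - η) hη (by linarith)
  rw [secondDiff, h.eq_zero_of_ge (s := s + η) (by linarith), sub_zero, abs_le]
  constructor <;> linarith [h.nonneg s, h.nonneg (s - η)]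

lemma intervalIntegral_abs_secondDiff_le (h : IsChordProfile f α β K) (hη : 0 < η)
    (hd : 2 * η ≤ d) (hd_le : 2 * d ≤ β - α) :
    ∫ s in (β - d)..(β - η), |secondDiff f η s| ≤ 4 * K * (η * √η) := by
  have hK := h.K_nonneg
  rw [h.integral_abs_secondDiff_eq hη (by linarith) (by linarith) le_rfl]
  have hleft := h.integral_sub_comp_sub_le hη hd (a := β - d) (by linarith)
  have hright : ∫ s in (β - η)..(β - η + η), (f (s - η) - f s) ≤ _ :=
    integral_le_length_mul ((h.integrable.comp_sub_right η).sub h.integrable)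
      (le_add_of_nonneg_right hη.le) fun s hs => (sub_le_self _ (h.nonneg s)).trans
        (h.le_of_sub_le hη.le (x := s - η) (by linarith [hs.1]))
  have hsqrt : 2 * K * η ^ 2 / √d ≤ 2 * K * (η * √η) :=
    calc 2 * K * η ^ 2 / √d ≤ 2 * K * η ^ 2 / √η := by gcongr; linarith
      _ = 2 * K * (η * (η / √η)) := by ring
      _ = 2 * K * (η * √η) := by rw [Real.div_sqrt]
  linarith

lemma setIntegral_abs_secondDiff_right_le (h : IsChordProfile f α β K) (hη : 0 < η)
    (hd : 2 * η ≤ d) (hd_le : 2 * d ≤ β - α) :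
    ∫ s in Ioi (β - d), |secondDiff f η s| ≤ 12 * K * (η * √η) := by
  have hInt := (integrable_secondDiff h.integrable η).abs
  have hIoc : ∫ s in Ioi (β - d), |secondDiff f η s| =
      ∫ s in (β - d)..(β + η), |secondDiff f η s| := by
    rw [intervalIntegral.integral_of_le (by linarith)]
    refine setIntegral_eq_of_subset_of_forall_sdiff_eq_zero measurableSet_Ioi
      (fun s hs => hs.1) fun s hs => ?_
    have hβs : β + η ≤ s := le_of_not_ge fun hle => hs.2 ⟨hs.1, hle⟩
    rw [secondDiff, h.eq_zero_of_ge (by linarith), h.eq_zero_of_ge (by linarith),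
      h.eq_zero_of_ge (by linarith)]
    norm_num
  have hadj := intervalIntegral.integral_add_adjacent_intervals
    (hInt.intervalIntegrable (a := β - d) (b := β - η))
    (hInt.intervalIntegrable (a := β - η) (b := β + η))
  have hend := integral_le_length_mul hInt (by linarith)
    fun s (hs : s ∈ Icc (β - η) (β + η)) => h.abs_secondDiff_le hη.le hs.1
  linarith [h.intervalIntegral_abs_secondDiff_le hη hd hd_le]

lemma setIntegral_abs_secondDiff_left_le (h : IsChordProfile f α β K) (hη : 0 < η)
    (hd : 2 * η ≤ d) (hd_le : 2 * d ≤ β - α) :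
    ∫ s in Iio (α + d), |secondDiff f η s| ≤ 12 * K * (η * √η) := by
  have := h.comp_neg.setIntegral_abs_secondDiff_right_le hη hd (by linarith)
  simp only [secondDiff_comp_neg] at this
  rwa [integral_comp_neg_Ioi (-α - d) (fun s => |secondDiff f η s|), neg_sub_left, neg_neg,
    add_comm d, integral_Iic_eq_integral_Iio] at this

end IsChordProfile

/-! ### Wave packets and almost orthogonality -/

/-- `U` is a wave packet: a superposition, of total mass at most `M`, of oscillations
`t ↦ 𝐞 (-(σ * t))` whose frequencies `σ` lie within `w` of `τ`. -/
def IsWavePacket (U : ℝ → ℂ) (τ M w : ℝ) : Prop :=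
  ∃ q : ℝ → ℂ, Integrable q ∧ ∫ σ, ‖q σ‖ ≤ M ∧ Function.support q ⊆ Metric.closedBall τ w ∧ U = 𝓕 q

/-- The Gaussian weight used to localise to the unit interval `[a, a + 1]`. -/
def gaussianWindow (a t : ℝ) : ℝ := Real.exp (-Real.pi * (t - a) ^ 2)

lemma gaussianWindow_pos (a t : ℝ) : 0 < gaussianWindow a t := Real.exp_pos _

lemma integrable_gaussianWindow (a : ℝ) : Integrable (gaussianWindow a) :=
  (integrable_exp_neg_mul_sq Real.pi_pos).comp_sub_right a

lemma norm_fourier_gaussianWindow_mul_fourierChar (a σ σ' : ℝ) :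
    ‖𝓕 (fun t => (gaussianWindow a t : ℂ) * 𝐞 (t * σ)) σ'‖ =
      Real.exp (-Real.pi * (σ' - σ) ^ 2) := by
  have hgauss : (fun t : ℝ => (gaussianWindow a t : ℂ) * 𝐞 (t * σ)) = fun t : ℝ =>
      Complex.exp (-(Real.pi * a ^ 2)) *
        Complex.exp (-Real.pi * 1 * t ^ 2 + 2 * Real.pi * (a + σ * Complex.I) * t) := by
    funext t
    rw [gaussianWindow, Real.fourierChar_apply, ← Complex.exp_add, Complex.ofReal_exp,
      ← Complex.exp_add]
    push_cast
    ring_nf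
  rw [hgauss, fourier_const_mul, fourier_gaussian_pi' (by simp), Complex.one_cpow, norm_mul,
    norm_mul, div_one, norm_one, one_mul, Complex.norm_exp, Complex.norm_exp, ← Real.exp_add]
  congr 1
  simp [pow_two]
  ring

lemma exp_neg_pi_mul_sq_le (y : ℝ) : Real.exp (-Real.pi * y ^ 2) ≤ 8 / (1 + |y|) ^ 4 := by
  rw [le_div_iff₀ (by positivity), neg_mul, Real.exp_neg, inv_mul_le_iff₀ (Real.exp_pos _)]
  have hexp : 1 + Real.pi * y ^ 2 + (Real.pi * y ^ 2) ^ 2 / 2 ≤ Real.exp (Real.pi * y ^ 2) :=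
    Real.quadratic_le_exp_of_nonneg (by positivity)
  have hquartic : y ^ 4 ≤ (Real.pi * y ^ 2) ^ 2 / 2 := by
    have : (2 : ℝ) ≤ Real.pi ^ 2 := by nlinarith [Real.pi_gt_three]
    nlinarith [sq_nonneg (y ^ 2)]
  have hconvex : (1 + |y|) ^ 4 ≤ 8 * (1 + y ^ 4) := by
    have := add_pow_le zero_le_one (abs_nonneg y) 4
    rwa [one_pow, Even.pow_abs (by decide), show (2 : ℝ) ^ (4 - 1) = 8 by norm_num] at this
  linarith [show 0 ≤ Real.pi * y ^ 2 by positivity]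

lemma exp_neg_pi_mul_sub_sq_le {σ σ' τ τ' w : ℝ} (hσ : |σ - τ| ≤ w) (hσ' : |σ' - τ'| ≤ w) :
    Real.exp (-Real.pi * (σ' - σ) ^ 2) ≤ 8 * (1 + 2 * w) ^ 4 * ((1 + |τ - τ'|) ^ 4)⁻¹ := by
  have hw : 0 ≤ w := (abs_nonneg _).trans hσ
  have hτ : 1 + |τ - τ'| ≤ (1 + 2 * w) * (1 + |σ' - σ|) := by
    have : |τ - τ'| ≤ |σ' - σ| + 2 * w := by grind
    nlinarith [abs_nonneg (σ' - σ)]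
  refine (exp_neg_pi_mul_sq_le _).trans ?_
  rw [← div_eq_mul_inv, div_le_div_iff₀ (by positivity) (by positivity), mul_assoc, ← mul_pow]
  gcongr

/-- On `[a, a + 1]` the Gaussian window is at least `exp (-π)`. -/
lemma intervalIntegral_le_exp_mul_integral_gaussianWindow {F : ℝ → ℝ} {a : ℝ} (hF : Continuous F)
    (hF₀ : ∀ t, 0 ≤ F t) (hint : Integrable fun t => gaussianWindow a t * F t) :
    ∫ t in a..(a + 1), F t ≤ Real.exp Real.pi * ∫ t, gaussianWindow a t * F t := by
  have ha : a ≤ a + 1 := (lt_add_one a).le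
  rw [← integral_const_mul]
  calc ∫ t in a..(a + 1), F t
      ≤ ∫ t in a..(a + 1), Real.exp Real.pi * (gaussianWindow a t * F t) := by
        refine intervalIntegral.integral_mono_on ha (hF.intervalIntegrable _ _)
          (hint.const_mul _).intervalIntegrable fun t ht => ?_
        rw [← mul_assoc]
        refine le_mul_of_one_le_left (hF₀ t) ?_
        rw [gaussianWindow, ← Real.exp_add, Real.one_le_exp_iff]
        have : (t - a) ^ 2 ≤ 1 := pow_le_one₀ (by linarith [ht.1]) (by linarith [ht.2])
        nlinarith [Real.pi_pos]
    _ ≤ ∫ t, Real.exp Real.pi * (gaussianWindow a t * F t) := by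
        rw [intervalIntegral.integral_of_le ha]
        exact setIntegral_le_integral (hint.const_mul _) (.of_forall fun t =>
          mul_nonneg (Real.exp_pos _).le (mul_nonneg (gaussianWindow_pos a t).le (hF₀ t)))

/-- Schur's test, by `2 * M k * M l ≤ M k ^ 2 + M l ^ 2`. -/
lemma sum_sum_mul_mul_le {ι : Type*} {S : Finset ι} {M A : ι → ℝ} {K : ι → ι → ℝ}
    (hK : ∀ k l, 0 ≤ K k l) (hsymm : ∀ k l, K k l = K l k) (hA : ∀ k ∈ S, ∑ l ∈ S, K k l ≤ A k) :
    ∑ k ∈ S, ∑ l ∈ S, M k * M l * K k l ≤ ∑ k ∈ S, M k ^ 2 * A k := by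
  have hrow : ∑ k ∈ S, ∑ l ∈ S, M k ^ 2 * K k l ≤ ∑ k ∈ S, M k ^ 2 * A k := by
    simp only [← Finset.mul_sum]
    exact Finset.sum_le_sum fun k hk => mul_le_mul_of_nonneg_left (hA k hk) (sq_nonneg _)
  have hcol : ∑ k ∈ S, ∑ l ∈ S, M l ^ 2 * K k l = ∑ k ∈ S, ∑ l ∈ S, M k ^ 2 * K k l := by
    rw [Finset.sum_comm]
    simp only [hsymm]
  have hamgm : 2 * ∑ k ∈ S, ∑ l ∈ S, M k * M l * K k l ≤
      ∑ k ∈ S, ∑ l ∈ S, M k ^ 2 * K k l + ∑ k ∈ S, ∑ l ∈ S, M l ^ 2 * K k l := by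
    simp only [Finset.mul_sum, ← Finset.sum_add_distrib, ← add_mul, ← mul_assoc]
    exact Finset.sum_le_sum fun k _ => Finset.sum_le_sum fun l _ =>
      mul_le_mul_of_nonneg_right (two_mul_le_add_sq _ _) (hK k l)
  linarith

namespace IsWavePacket

variable {U V : ℝ → ℂ} {τ τ' M M' w : ℝ}

lemma of_fourier_comp_mul {q : ℝ → ℂ} {c r N : ℝ} (hN : 0 < N) (hq : Integrable q)
    (hsupp : Function.support q ⊆ Metric.closedBall c r) :
    IsWavePacket (fun t => 𝓕 q (N * t)) (N * c) (∫ s, ‖q s‖) (N * r) := by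
  have hN' : |N|⁻¹ * |N| = 1 := inv_mul_cancel₀ (abs_pos.2 hN.ne').ne'
  refine ⟨fun σ => (N : ℂ)⁻¹ * q (σ / N), (hq.comp_div hN.ne').const_mul _, ?_, fun σ hσ => ?_,
    funext fun t => (fourier_comp_div q hN t).symm⟩
  · simp only [norm_mul, norm_inv, Complex.norm_real, Real.norm_eq_abs]
    rw [integral_const_mul, Measure.integral_comp_div (fun s => ‖q s‖), smul_eq_mul, ← mul_assoc,
      hN', one_mul]
  · have := hsupp (right_ne_zero_of_mul hσ)
    rw [Metric.mem_closedBall, Real.dist_eq] at this ⊢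
    rw [show σ - N * c = N * (σ / N - c) by field_simp, abs_mul, abs_of_pos hN]
    exact mul_le_mul_of_nonneg_left this hN.le

lemma const_mul (h : IsWavePacket U τ M w) (c : ℂ) :
    IsWavePacket (fun t => c * U t) τ (‖c‖ * M) w := by
  obtain ⟨q, hq, hM, hsupp, rfl⟩ := h
  refine ⟨fun σ => c * q σ, hq.const_mul c, ?_,
    (Function.support_mul_subset_right (fun _ => c) q).trans hsupp,
    funext fun t => (fourier_const_mul c q t).symm⟩
  simp only [norm_mul, integral_const_mul]
  exact mul_le_mul_of_nonneg_left hM (norm_nonneg c)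

lemma mono (h : IsWavePacket U τ M w) (hM : M ≤ M') : IsWavePacket U τ M' w :=
  let ⟨q, hq, hqM, hsupp, hU⟩ := h
  ⟨q, hq, hqM.trans hM, hsupp, hU⟩

lemma continuous (h : IsWavePacket U τ M w) : Continuous U := by
  obtain ⟨q, hq, -, -, rfl⟩ := h
  exact continuous_fourier hq

lemma norm_le (h : IsWavePacket U τ M w) (t : ℝ) : ‖U t‖ ≤ M := by
  obtain ⟨q, -, hM, -, rfl⟩ := h
  exact (norm_fourier_le q t).trans hM

lemma integrable_gaussianWindow_mul_conj (h : IsWavePacket U τ M w) (a : ℝ) :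
    Integrable fun t => (gaussianWindow a t : ℂ) * (starRingEnd ℂ) (U t) :=
  (integrable_gaussianWindow a).ofReal.mul_bdd
    (Complex.continuous_conj.comp h.continuous).aestronglyMeasurable
    (.of_forall fun t => (RCLike.norm_conj (U t)).trans_le (h.norm_le t))

lemma norm_integral_mul_le (h : IsWavePacket U τ M w) {g : ℝ → ℂ} {B : ℝ} (hg : Integrable g)
    (hB₀ : 0 ≤ B) (hB : ∀ σ, |σ - τ| ≤ w → ‖𝓕 g σ‖ ≤ B) : ‖∫ t, U t * g t‖ ≤ M * B := by
  obtain ⟨q, hq, hM, hsupp, rfl⟩ := h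
  rw [integral_fourier_mul_eq hq hg]
  calc ‖∫ σ, q σ * 𝓕 g σ‖ ≤ ∫ σ, ‖q σ‖ * B := by
        refine norm_integral_le_of_norm_le (hq.norm.mul_const B) (.of_forall fun σ => ?_)
        rw [norm_mul]
        by_cases hσ : q σ = 0
        · simp only [hσ, norm_zero, zero_mul, le_refl]
        · exact mul_le_mul_of_nonneg_left (hB σ (hsupp hσ)) (norm_nonneg _)
    _ ≤ M * B := by
        rw [integral_mul_const]
        exact mul_le_mul_of_nonneg_right hM hB₀

lemma norm_fourier_gaussianWindow_mul_conj_le (h : IsWavePacket V τ' M w) {a σ B : ℝ} (hB₀ : 0 ≤ B)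
    (hB : ∀ σ', |σ' - τ'| ≤ w → Real.exp (-Real.pi * (σ' - σ) ^ 2) ≤ B) :
    ‖𝓕 (fun t => (gaussianWindow a t : ℂ) * (starRingEnd ℂ) (V t)) σ‖ ≤ M * B := by
  have hchar : Integrable fun t => (gaussianWindow a t : ℂ) * 𝐞 (t * σ) :=
    (integrable_gaussianWindow a).ofReal.mul_bdd (c := 1)
      (by fun_prop) (.of_forall fun t => (Circle.norm_coe _).le)
  have hconj : 𝓕 (fun t => (gaussianWindow a t : ℂ) * (starRingEnd ℂ) (V t)) σ =
      (starRingEnd ℂ) (∫ t, V t * ((gaussianWindow a t : ℂ) * 𝐞 (t * σ))) := by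
    rw [← integral_conj, Real.fourier_real_eq]
    refine integral_congr_ae (.of_forall fun t => ?_)
    simp only [map_mul, Complex.conj_ofReal, Circle.starRingEnd_addChar, Circle.smul_def,
      smul_eq_mul]
    ring
  rw [hconj, RCLike.norm_conj]
  exact h.norm_integral_mul_le hchar hB₀ fun σ' hσ' =>
    (norm_fourier_gaussianWindow_mul_fourierChar a σ σ').trans_le (hB σ' hσ')

lemma norm_integral_gaussianWindow_mul_le (hU : IsWavePacket U τ M w) (hV : IsWavePacket V τ' M' w)
    (a : ℝ) : ‖∫ t, U t * ((gaussianWindow a t : ℂ) * (starRingEnd ℂ) (V t))‖ ≤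
      8 * (1 + 2 * w) ^ 4 * (M * M' * ((1 + |τ - τ'|) ^ 4)⁻¹) := by
  have hM' : 0 ≤ M' := (norm_nonneg _).trans (hV.norm_le 0)
  have hB₀ : 0 ≤ 8 * (1 + 2 * w) ^ 4 * ((1 + |τ - τ'|) ^ 4)⁻¹ := by positivity
  have := hU.norm_integral_mul_le (hV.integrable_gaussianWindow_mul_conj a) (mul_nonneg hM' hB₀)
    fun σ hσ => hV.norm_fourier_gaussianWindow_mul_conj_le (a := a) hB₀
      fun σ' hσ' => exp_neg_pi_mul_sub_sq_le hσ hσ'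
  exact this.trans_eq (by ring)

section Family

variable {ι : Type*} {S : Finset ι} {U : ι → ℝ → ℂ} {τ M A : ι → ℝ}

lemma gaussianWindow_mul_norm_sum_sq (a t : ℝ) (S : Finset ι) (U : ι → ℝ → ℂ) :
    ((gaussianWindow a t * ‖∑ k ∈ S, U k t‖ ^ 2 : ℝ) : ℂ) =
      ∑ k ∈ S, ∑ l ∈ S, U k t * ((gaussianWindow a t : ℂ) * (starRingEnd ℂ) (U l t)) := by
  push_cast
  rw [← Complex.mul_conj', map_sum, Finset.sum_mul_sum, Finset.mul_sum]
  simp only [Finset.mul_sum, mul_left_comm]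

lemma integral_gaussianWindow_mul_norm_sum_sq_le (hU : ∀ k ∈ S, IsWavePacket (U k) (τ k) (M k) w)
    (a : ℝ) : Integrable (fun t => gaussianWindow a t * ‖∑ k ∈ S, U k t‖ ^ 2) ∧
    ∫ t, gaussianWindow a t * ‖∑ k ∈ S, U k t‖ ^ 2 ≤ 8 * (1 + 2 * w) ^ 4 *
      ∑ k ∈ S, ∑ l ∈ S, M k * M l * ((1 + |τ k - τ l|) ^ 4)⁻¹ := by
  have hterm : ∀ k ∈ S, ∀ l ∈ S, Integrable fun t =>
      U k t * ((gaussianWindow a t : ℂ) * (starRingEnd ℂ) (U l t)) := fun k hk l hl =>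
    ((hU l hl).integrable_gaussianWindow_mul_conj a).bdd_mul
      (hU k hk).continuous.aestronglyMeasurable (.of_forall (hU k hk).norm_le)
  have hint : Integrable fun t => ((gaussianWindow a t * ‖∑ k ∈ S, U k t‖ ^ 2 : ℝ) : ℂ) := by
    simp only [gaussianWindow_mul_norm_sum_sq]
    exact integrable_finsetSum _ fun k hk => integrable_finsetSum _ fun l hl => hterm k hk l hl
  refine ⟨hint.re, ?_⟩
  calc ∫ t, gaussianWindow a t * ‖∑ k ∈ S, U k t‖ ^ 2
      ≤ ‖((∫ t, gaussianWindow a t * ‖∑ k ∈ S, U k t‖ ^ 2 : ℝ) : ℂ)‖ := by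
        rw [Complex.norm_real]
        exact le_abs_self _
    _ = ‖∑ k ∈ S, ∑ l ∈ S, ∫ t, U k t * ((gaussianWindow a t : ℂ) *
          (starRingEnd ℂ) (U l t))‖ := by
        rw [← integral_complex_ofReal]
        simp only [gaussianWindow_mul_norm_sum_sq]
        rw [integral_finsetSum _ fun k hk => integrable_finsetSum _ fun l hl => hterm k hk l hl]
        congr 1
        exact Finset.sum_congr rfl fun k hk => integral_finsetSum _ fun l hl => hterm k hk l hl
    _ ≤ ∑ k ∈ S, ∑ l ∈ S, 8 * (1 + 2 * w) ^ 4 * (M k * M l * ((1 + |τ k - τ l|) ^ 4)⁻¹) :=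
        norm_sum_le_of_le _ fun k hk => norm_sum_le_of_le _ fun l hl =>
          (hU k hk).norm_integral_gaussianWindow_mul_le (hU l hl) a
    _ = _ := by simp only [Finset.mul_sum]

lemma intervalIntegral_norm_sum_sq_le (hU : ∀ k ∈ S, IsWavePacket (U k) (τ k) (M k) w)
    (hA : ∀ k ∈ S, ∑ l ∈ S, ((1 + |τ k - τ l|) ^ 4)⁻¹ ≤ A k) (a : ℝ) :
    ∫ t in a..(a + 1), ‖∑ k ∈ S, U k t‖ ^ 2 ≤
      Real.exp Real.pi * (8 * (1 + 2 * w) ^ 4) * ∑ k ∈ S, M k ^ 2 * A k := by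
  obtain ⟨hint, hle⟩ := integral_gaussianWindow_mul_norm_sum_sq_le hU a
  have hcont : Continuous fun t => ∑ k ∈ S, U k t :=
    continuous_finsetSum _ fun k hk => (hU k hk).continuous
  have hschur := sum_sum_mul_mul_le (S := S) (M := M) (A := A)
    (K := fun k l => ((1 + |τ k - τ l|) ^ 4)⁻¹) (fun k l => by positivity)
    (fun k l => by rw [abs_sub_comm]) hA
  calc ∫ t in a..(a + 1), ‖∑ k ∈ S, U k t‖ ^ 2
      ≤ Real.exp Real.pi * ∫ t, gaussianWindow a t * ‖∑ k ∈ S, U k t‖ ^ 2 :=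
        intervalIntegral_le_exp_mul_integral_gaussianWindow (hcont.norm.pow 2)
          (fun t => sq_nonneg _) hint
    _ ≤ Real.exp Real.pi * (8 * (1 + 2 * w) ^ 4 * ∑ k ∈ S, M k ^ 2 * A k) := by
        gcongr
        exact hle.trans (by gcongr)
    _ = _ := by ring

end Family

end IsWavePacket

/-! ### Lattice points near level curves -/

/-- The inclusion of the integer lattice in the plane. The plane is modelled as `ℝ × ℝ`, whose sup
norm has squares as balls. -/
def latticePt (k : ℤ × ℤ) : ℝ × ℝ := (k.1, k.2)

/-- The half-open unit square with lower left corner `k`, a fundamental domain of the lattice. -/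
def unitSquare (k : ℤ × ℤ) : Set (ℝ × ℝ) := Ico (k.1 : ℝ) (k.1 + 1) ×ˢ Ico (k.2 : ℝ) (k.2 + 1)

lemma measurableSet_unitSquare (k : ℤ × ℤ) : MeasurableSet (unitSquare k) :=
  measurableSet_Ico.prod measurableSet_Ico

lemma volume_unitSquare (k : ℤ × ℤ) : volume (unitSquare k) = 1 := by
  simp [unitSquare, Measure.volume_eq_prod]

lemma disjoint_unitSquare {k l : ℤ × ℤ} (h : k ≠ l) :
    Disjoint (unitSquare k) (unitSquare l) := by
  refine Set.disjoint_left.2 fun y hk hl => h (Prod.ext ?_ ?_)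
  · rw [← Int.floor_eq_iff.2 hk.1, ← Int.floor_eq_iff.2 hl.1]
  · rw [← Int.floor_eq_iff.2 hk.2, ← Int.floor_eq_iff.2 hl.2]

lemma norm_sub_latticePt_le {k : ℤ × ℤ} {y : ℝ × ℝ} (h : y ∈ unitSquare k) :
    ‖y - latticePt k‖ ≤ 1 := by
  obtain ⟨⟨h₁, h₁'⟩, h₂, h₂'⟩ := h
  refine max_le ?_ ?_ <;> rw [Real.norm_eq_abs, abs_le] <;>
    simp only [latticePt, Prod.fst_sub, Prod.snd_sub] <;> constructor <;> linarith

lemma card_le_volume_of_unitSquare_subset {S : Finset (ℤ × ℤ)} {T : Set (ℝ × ℝ)}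
    (hT : volume T ≠ ⊤) (h : ∀ k ∈ S, unitSquare k ⊆ T) : (S.card : ℝ) ≤ volume.real T :=
  calc (S.card : ℝ) = ∑ k ∈ S, volume.real (unitSquare k) := by
        simp [measureReal_def, volume_unitSquare]
    _ = volume.real (⋃ k ∈ S, unitSquare k) :=
        (measureReal_biUnion_finset (fun _ _ _ _ hkl => disjoint_unitSquare hkl)
          (fun k _ => measurableSet_unitSquare k)
          (fun k _ => (volume_unitSquare k).trans_ne ENNReal.one_ne_top)).symm
    _ ≤ volume.real T := measureReal_mono (iUnion₂_subset h) hT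

/-- A positively homogeneous Lipschitz function on the plane bounded below by a multiple of the
norm. Support functions of bounded domains around the origin are of this kind. -/
structure IsLipschitzGauge (ρ : ℝ × ℝ → ℝ) (r B : ℝ) : Prop where
  r_pos : 0 < r
  map_smul : ∀ c : ℝ, 0 < c → ∀ x, ρ (c • x) = c * ρ x
  abs_sub_le : ∀ x y, |ρ x - ρ y| ≤ B * ‖x - y‖
  mul_norm_le : ∀ x, r * ‖x‖ ≤ ρ x

namespace IsLipschitzGauge

variable {ρ : ℝ × ℝ → ℝ} {r B : ℝ}

lemma B_nonneg (h : IsLipschitzGauge ρ r B) : 0 ≤ B := by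
  simpa using (abs_nonneg _).trans (h.abs_sub_le (1, 0) 0)

lemma continuous (h : IsLipschitzGauge ρ r B) : Continuous ρ :=
  (LipschitzWith.of_dist_le_mul (K := ⟨B, h.B_nonneg⟩) fun x y => by
    rw [Real.dist_eq, dist_eq_norm]
    exact h.abs_sub_le x y).continuous

lemma comp_neg (h : IsLipschitzGauge ρ r B) : IsLipschitzGauge (fun x => ρ (-x)) r B where
  r_pos := h.r_pos
  map_smul c hc x := by rw [← smul_neg, h.map_smul c hc]
  abs_sub_le x y := by
    have := h.abs_sub_le (-x) (-y)
    rwa [← neg_sub', norm_neg] at this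
  mul_norm_le x := by simpa only [norm_neg] using h.mul_norm_le (-x)

lemma volume_sublevel_ne_top (h : IsLipschitzGauge ρ r B) (b : ℝ) : volume {y | ρ y < b} ≠ ⊤ := by
  have hball : {y | ρ y < b} ⊆ Metric.closedBall 0 (b / r) := fun y (hy : ρ y < b) => by
    rw [mem_closedBall_zero_iff, le_div_iff₀ h.r_pos, mul_comm]
    exact (h.mul_norm_le y).trans hy.le
  exact ((measure_mono hball).trans_lt measure_closedBall_lt_top).ne

lemma volume_sublevel (h : IsLipschitzGauge ρ r B) {b : ℝ} (hb : 0 < b) :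
    volume.real {y | ρ y < b} = b ^ 2 * volume.real {y | ρ y < 1} := by
  have hsmul : {y | ρ y < b} = b • {y | ρ y < 1} := by
    ext y
    rw [mem_smul_set_iff_inv_smul_mem₀ hb.ne', mem_ofPred_eq, mem_ofPred_eq,
      h.map_smul _ (inv_pos.2 hb), inv_mul_lt_iff₀ hb, mul_one]
  simp only [hsmul, measureReal_def, Measure.addHaar_smul, ENNReal.toReal_mul,
    ENNReal.toReal_ofReal (abs_nonneg _), Module.finrank_prod, Module.finrank_self]
  rw [abs_of_pos (by positivity)]

lemma volume_annulus_le (h : IsLipschitzGauge ρ r B) {x L : ℝ} (hx : 0 ≤ x) (hL : 0 < L) :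
    volume.real {y | |x - ρ y| < L} ≤ 4 * volume.real {y | ρ y < 1} * ((x + L) * L) := by
  set V := volume.real {y | ρ y < 1}
  have hV : 0 ≤ V := measureReal_nonneg
  have hfin := h.volume_sublevel_ne_top (x + L)
  have houter : {y | |x - ρ y| < L} ⊆ {y | ρ y < x + L} := fun y (hy : |x - ρ y| < L) => by
    change ρ y < x + L
    linarith [(abs_lt.1 hy).1]
  rcases le_or_gt x L with hxL | hxL
  · calc volume.real {y | |x - ρ y| < L} ≤ volume.real {y | ρ y < x + L} :=
          measureReal_mono houter hfin
      _ = (x + L) * V * (x + L) := by rw [h.volume_sublevel (by linarith)]; ring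
      _ ≤ (x + L) * V * (4 * L) := by gcongr; linarith
      _ = _ := by ring
  · have hdisj : Disjoint {y | |x - ρ y| < L} {y | ρ y < x - L} :=
      Set.disjoint_left.2 fun y (hy : |x - ρ y| < L) (hy' : ρ y < x - L) => by
        linarith [(abs_lt.1 hy).2]
    have hinner : {y | ρ y < x - L} ⊆ {y | ρ y < x + L} := fun y (hy : ρ y < x - L) =>
      hy.trans (by linarith)
    have hle := measureReal_mono (union_subset houter hinner) hfin
    rw [measureReal_union hdisj (measurableSet_lt h.continuous.measurable measurable_const)
      (measure_ne_top_of_subset houter hfin) (h.volume_sublevel_ne_top _),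
      h.volume_sublevel (b := x - L) (by linarith),
      h.volume_sublevel (b := x + L) (by linarith)] at hle
    nlinarith [mul_nonneg hV (sq_nonneg L)]

lemma card_le (h : IsLipschitzGauge ρ r B) {S : Finset (ℤ × ℤ)} {x J : ℝ} (hx : 0 ≤ x) (hJ : 1 ≤ J)
    (hS : ∀ l ∈ S, |x - ρ (latticePt l)| < J) :
    (S.card : ℝ) ≤ 4 * volume.real {y | ρ y < 1} * (1 + B) ^ 2 * ((x + J) * J) := by
  have hB := h.B_nonneg
  have hfin : volume {y | |x - ρ y| < J + B} ≠ ⊤ :=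
    measure_ne_top_of_subset (fun y (hy : |x - ρ y| < J + B) => by
      change ρ y < x + (J + B)
      linarith [(abs_lt.1 hy).1]) (h.volume_sublevel_ne_top (x + (J + B)))
  have hsquare : ∀ l ∈ S, unitSquare l ⊆ {y | |x - ρ y| < J + B} := fun l hl y hy => by
    have hlip : |ρ (latticePt l) - ρ y| ≤ B := by
      rw [abs_sub_comm]
      exact (h.abs_sub_le y _).trans (mul_le_of_le_one_right hB (norm_sub_latticePt_le hy))
    exact (_root_.abs_sub_le x (ρ (latticePt l)) (ρ y)).trans_lt
      (add_lt_add_of_lt_of_le (hS l hl) hlip)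
  calc (S.card : ℝ) ≤ volume.real {y | |x - ρ y| < J + B} :=
        card_le_volume_of_unitSquare_subset hfin hsquare
    _ ≤ 4 * volume.real {y | ρ y < 1} * ((x + (J + B)) * (J + B)) :=
        h.volume_annulus_le hx (by linarith)
    _ ≤ 4 * volume.real {y | ρ y < 1} * (((1 + B) * (x + J)) * ((1 + B) * J)) := by
        gcongr <;> nlinarith [mul_nonneg hB hx]
    _ = _ := by ring

lemma sum_floor_eq_inv_le (h : IsLipschitzGauge ρ r B) {x : ℝ} (hx : 0 ≤ x) (j : ℕ)
    (S : Finset (ℤ × ℤ)) :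
    ∑ l ∈ S with ⌊|x - ρ (latticePt l)|⌋₊ = j, ((1 + |x - ρ (latticePt l)|) ^ 4)⁻¹ ≤
      4 * volume.real {y | ρ y < 1} * (1 + B) ^ 2 * (x + 1) * (((j : ℝ) + 1) ^ 2)⁻¹ := by
  set C := 4 * volume.real {y | ρ y < 1} * (1 + B) ^ 2
  have hj : (0 : ℝ) ≤ j := Nat.cast_nonneg j
  have hcard := h.card_le (S := S.filter fun l => ⌊|x - ρ (latticePt l)|⌋₊ = j) hx
    (le_add_of_nonneg_left hj) fun l hl => (Finset.mem_filter.1 hl).2 ▸ Nat.lt_floor_add_one _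
  have hterm : ∀ l ∈ S.filter (fun l => ⌊|x - ρ (latticePt l)|⌋₊ = j),
      ((1 + |x - ρ (latticePt l)|) ^ 4)⁻¹ ≤ (((j : ℝ) + 1) ^ 4)⁻¹ := fun l hl => by
    have : (j : ℝ) ≤ |x - ρ (latticePt l)| :=
      (Finset.mem_filter.1 hl).2 ▸ Nat.floor_le (abs_nonneg _)
    exact inv_anti₀ (by positivity) (pow_le_pow_left₀ (by positivity) (by linarith) 4)
  calc _ ≤ _ := Finset.sum_le_card_nsmul _ _ _ hterm
    _ ≤ (C * ((x + (j + 1)) * (j + 1))) * (((j : ℝ) + 1) ^ 4)⁻¹ := by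
        rw [nsmul_eq_mul]
        gcongr
    _ ≤ (C * (((x + 1) * (j + 1)) * (j + 1))) * (((j : ℝ) + 1) ^ 4)⁻¹ := by
        gcongr
        nlinarith
    _ = C * (x + 1) * (((j : ℝ) + 1) ^ 2)⁻¹ := by field_simp

lemma exists_sum_inv_le (h : IsLipschitzGauge ρ r B) : ∃ C : ℝ, 0 ≤ C ∧
    ∀ (S : Finset (ℤ × ℤ)) (x : ℝ), 0 ≤ x →
      ∑ l ∈ S, ((1 + |x - ρ (latticePt l)|) ^ 4)⁻¹ ≤ C * (x + 1) := by
  set C := 4 * volume.real {y | ρ y < 1} * (1 + B) ^ 2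
  have hsum : Summable fun j : ℕ => (((j : ℝ) + 1) ^ 2)⁻¹ := by
    simpa using (summable_nat_add_iff 1).2 (Real.summable_nat_pow_inv.2 one_lt_two)
  refine ⟨C * ∑' j : ℕ, (((j : ℝ) + 1) ^ 2)⁻¹,
    mul_nonneg (by positivity) (tsum_nonneg fun j => by positivity), fun S x hx => ?_⟩
  set φ : ℤ × ℤ → ℕ := fun l => ⌊|x - ρ (latticePt l)|⌋₊
  rw [← Finset.sum_fiberwise_of_maps_to (g := φ) fun l hl => Finset.mem_image_of_mem φ hl]
  calc _ ≤ ∑ j ∈ S.image φ, C * (x + 1) * (((j : ℝ) + 1) ^ 2)⁻¹ :=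
        Finset.sum_le_sum fun j _ => h.sum_floor_eq_inv_le hx j S
    _ ≤ C * (x + 1) * ∑' j : ℕ, (((j : ℝ) + 1) ^ 2)⁻¹ := by
        rw [← Finset.mul_sum]
        gcongr
        exact hsum.sum_le_tsum _ fun j _ => by positivity
    _ = _ := by ring

end IsLipschitzGauge

/-! ### Sums over shells of the lattice -/

/-- The sup norm of an integer vector, as a natural number. -/
def supNatAbs (k : ℤ × ℤ) : ℕ := max k.1.natAbs k.2.natAbs

lemma supNatAbs_pos {k : ℤ × ℤ} (hk : k ≠ 0) : 0 < supNatAbs k := by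
  simpa [supNatAbs, Prod.ext_iff, imp_iff_not_or] using hk

lemma norm_latticePt (k : ℤ × ℤ) : ‖latticePt k‖ = supNatAbs k := by
  simp [latticePt, supNatAbs, Prod.norm_def, Nat.cast_natAbs]

lemma sum_comp_supNatAbs_le {S : Finset (ℤ × ℤ)} (hS : 0 ∉ S) {g : ℕ → ℝ} (hg : ∀ n, 0 ≤ g n) :
    ∑ k ∈ S, g (supNatAbs k) ≤ 8 * ∑ N ∈ Finset.Icc 1 (S.sup supNatAbs), N * g N := by
  rw [← Finset.sum_fiberwise_of_maps_to (g := supNatAbs) fun l hl => Finset.mem_Icc.2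
    ⟨supNatAbs_pos (ne_of_mem_of_not_mem hl hS), Finset.le_sup hl⟩, Finset.mul_sum]
  refine Finset.sum_le_sum fun N hN => ?_
  have hcard : (S.filter fun l => supNatAbs l = N).card ≤ 8 * N := by
    rw [← Int.card_box (Nat.one_le_iff_ne_zero.1 (Finset.mem_Icc.1 hN).1)]
    exact Finset.card_le_card fun l hl => Int.mem_box.2 (Finset.mem_filter.1 hl).2
  rw [Finset.sum_congr rfl fun l hl => congrArg g (Finset.mem_filter.1 hl).2, Finset.sum_const,
    nsmul_eq_mul, ← mul_assoc]
  exact mul_le_mul_of_nonneg_right (mod_cast hcard) (hg N)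

lemma sum_Icc_le_sum_Icc_floor_add {g a : ℕ → ℝ} {M c : ℝ} (hM : 1 ≤ M) (hc : 0 ≤ c)
    (ha : ∀ N, 0 ≤ a N) (hsmall : ∀ N : ℕ, 1 ≤ N → (N : ℝ) ≤ M → g N ≤ a N)
    (hlarge : ∀ N : ℕ, M < N → g N ≤ c * M * ((N : ℝ) ^ 2)⁻¹) (X : ℕ) :
    ∑ N ∈ Finset.Icc 1 X, g N ≤ ∑ N ∈ Finset.Icc 1 ⌊M⌋₊, a N + 2 * c := by
  have hM0 : 0 ≤ M := by linarith
  rw [← Finset.sum_filter_add_sum_filter_not (Finset.Icc 1 X) (fun N : ℕ => (N : ℝ) ≤ M)]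
  refine add_le_add ?_ ?_
  · calc _ ≤ ∑ N ∈ (Finset.Icc 1 X).filter (fun N : ℕ => (N : ℝ) ≤ M), a N := by
          refine Finset.sum_le_sum fun N hN => ?_
          rw [Finset.mem_filter, Finset.mem_Icc] at hN
          exact hsmall N hN.1.1 hN.2
      _ ≤ ∑ N ∈ Finset.Icc 1 ⌊M⌋₊, a N := by
          refine Finset.sum_le_sum_of_subset_of_nonneg (fun N hN => ?_) fun N _ _ => ha N
          rw [Finset.mem_filter, Finset.mem_Icc] at hN
          exact Finset.mem_Icc.2 ⟨hN.1.1, Nat.le_floor hN.2⟩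
  · calc _ ≤ ∑ N ∈ (Finset.Icc 1 X).filter (fun N : ℕ => ¬ (N : ℝ) ≤ M),
            c * M * ((N : ℝ) ^ 2)⁻¹ :=
          Finset.sum_le_sum fun N hN => hlarge N (not_le.1 (Finset.mem_filter.1 hN).2)
      _ ≤ ∑ N ∈ Finset.Ioo ⌊M⌋₊ (X + 1), c * M * ((N : ℝ) ^ 2)⁻¹ := by
          refine Finset.sum_le_sum_of_subset_of_nonneg (fun N hN => ?_) fun N _ _ => by positivity
          rw [Finset.mem_filter, Finset.mem_Icc, not_le] at hN
          exact Finset.mem_Ioo.2 ⟨(Nat.floor_lt hM0).2 hN.2, Nat.lt_succ_of_le hN.1.2⟩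
      _ ≤ c * M * (2 / (⌊M⌋₊ + 1)) := by
          rw [← Finset.mul_sum]
          gcongr
          exact sum_Ioo_inv_sq_le _ _
      _ ≤ c * M * (2 / M) := by
          gcongr
          exact (Nat.lt_floor_add_one M).le
      _ = 2 * c := by field_simp

/-- The size `min (1, (M / N) ^ 2)` of the Fourier coefficients, at frequencies of size `N`, of the
smoothing kernel at scale `1 / M`. -/
def cutoff (M : ℝ) (N : ℕ) : ℝ := min 1 ((M / N) ^ 2)

lemma cutoff_nonneg (M : ℝ) (N : ℕ) : 0 ≤ cutoff M N := le_min zero_le_one (sq_nonneg _)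

lemma cutoff_le_one (M : ℝ) (N : ℕ) : cutoff M N ≤ 1 := min_le_left _ _

lemma cutoff_le_sq (M : ℝ) (N : ℕ) : cutoff M N ≤ (M / N) ^ 2 := min_le_right _ _

lemma sum_inv_sqrt_le (m : ℕ) : ∑ N ∈ Finset.Icc 1 m, (√(N : ℝ))⁻¹ ≤ 2 * √(m : ℝ) := by
  induction m with
  | zero => simp
  | succ n ih =>
    rw [Finset.sum_Icc_succ_top (by omega)]
    have hpos : 0 < √((n + 1 : ℕ) : ℝ) := Real.sqrt_pos.2 (by positivity)
    have hstep : (√((n + 1 : ℕ) : ℝ))⁻¹ ≤ 2 * √((n + 1 : ℕ) : ℝ) - 2 * √(n : ℝ) := by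
      have hsucc : √((n + 1 : ℕ) : ℝ) ^ 2 = n + 1 := by rw [Real.sq_sqrt (by positivity)]; simp
      have hn : √(n : ℝ) ^ 2 = n := Real.sq_sqrt (by positivity)
      rw [inv_le_iff_one_le_mul₀ hpos]
      nlinarith [sq_nonneg (√((n + 1 : ℕ) : ℝ) - √(n : ℝ))]
    linarith

lemma sum_inv_sq_mul_cutoff_le {M : ℝ} (hM : 1 ≤ M) {S : Finset (ℤ × ℤ)} (hS : 0 ∉ S) :
    ∑ k ∈ S, ((supNatAbs k : ℝ) ^ 2)⁻¹ * cutoff M (supNatAbs k) ≤ 8 * (3 + Real.log M) := by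
  refine (sum_comp_supNatAbs_le hS (g := fun N => ((N : ℝ) ^ 2)⁻¹ * cutoff M N)
    fun N => mul_nonneg (by positivity) (cutoff_nonneg _ _)).trans ?_
  gcongr
  have hharmonic : ∑ N ∈ Finset.Icc 1 ⌊M⌋₊, (N : ℝ)⁻¹ ≤ 1 + Real.log M := by
    have := harmonic_floor_le_one_add_log M hM
    rw [harmonic_eq_sum_Icc] at this
    push_cast at this
    exact this
  refine (sum_Icc_le_sum_Icc_floor_add (a := fun N => (N : ℝ)⁻¹) hM zero_le_one
    (fun N => by positivity) (fun N hN _ => ?_) (fun N hN => ?_) _).trans (by linarith)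
  · have : (0 : ℝ) < N := by exact_mod_cast hN
    calc (N : ℝ) * (((N : ℝ) ^ 2)⁻¹ * cutoff M N) ≤ (N : ℝ) * (((N : ℝ) ^ 2)⁻¹ * 1) := by
          gcongr
          exact cutoff_le_one M N
      _ = (N : ℝ)⁻¹ := by field_simp
  · have hN0 : (0 : ℝ) < N := by linarith
    calc (N : ℝ) * (((N : ℝ) ^ 2)⁻¹ * cutoff M N) ≤ (N : ℝ) * (((N : ℝ) ^ 2)⁻¹ * (M / N) ^ 2) := by
          gcongr
          exact cutoff_le_sq M N
      _ = (M / N) * M * ((N : ℝ) ^ 2)⁻¹ := by field_simp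
      _ ≤ 1 * M * ((N : ℝ) ^ 2)⁻¹ := by
          gcongr
          exact (div_le_one hN0).2 hN.le

lemma sum_inv_mul_sqrt_mul_cutoff_le {M : ℝ} (hM : 1 ≤ M) {S : Finset (ℤ × ℤ)} (hS : 0 ∉ S) :
    ∑ k ∈ S, ((supNatAbs k : ℝ) * √(supNatAbs k))⁻¹ * cutoff M (supNatAbs k) ≤ 32 * √M := by
  refine (sum_comp_supNatAbs_le hS (g := fun N => ((N : ℝ) * √N)⁻¹ * cutoff M N)
    fun N => mul_nonneg (by positivity) (cutoff_nonneg _ _)).trans ?_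
  have hsqrt : √(⌊M⌋₊ : ℝ) ≤ √M := Real.sqrt_le_sqrt (Nat.floor_le (by linarith))
  suffices hsum : ∑ N ∈ Finset.Icc 1 (S.sup supNatAbs), (N : ℝ) * (((N : ℝ) * √N)⁻¹ * cutoff M N) ≤
      ∑ N ∈ Finset.Icc 1 ⌊M⌋₊, (√(N : ℝ))⁻¹ + 2 * √M by
    linarith [sum_inv_sqrt_le ⌊M⌋₊]
  refine sum_Icc_le_sum_Icc_floor_add hM (Real.sqrt_nonneg M) (fun N => by positivity)
    (fun N hN _ => ?_) (fun N hN => ?_) _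
  · have : (0 : ℝ) < N := by exact_mod_cast hN
    calc (N : ℝ) * (((N : ℝ) * √N)⁻¹ * cutoff M N) ≤ (N : ℝ) * (((N : ℝ) * √N)⁻¹ * 1) := by
          gcongr
          exact cutoff_le_one M N
      _ = (√(N : ℝ))⁻¹ := by field_simp
  · have hN0 : (0 : ℝ) < N := by linarith
    calc (N : ℝ) * (((N : ℝ) * √N)⁻¹ * cutoff M N)
        ≤ (N : ℝ) * (((N : ℝ) * √N)⁻¹ * (M / N) ^ 2) := by
          gcongr
          exact cutoff_le_sq M N
      _ = M / √N * M * ((N : ℝ) ^ 2)⁻¹ := by field_simp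
      _ ≤ M / √M * M * ((N : ℝ) ^ 2)⁻¹ := by gcongr
      _ = √M * M * ((N : ℝ) ^ 2)⁻¹ := by rw [Real.div_sqrt]

/-! ### The smoothing kernel and its Fourier series -/

lemma hasSum_inv_sq_mul_fourierChar_of_mem_Icc {x : ℝ} (hx : x ∈ Icc (0 : ℝ) 1) :
    HasSum (fun n : ℤ => 1 / (n : ℂ) ^ 2 * 𝐞 (n * x))
      ((2 * Real.pi ^ 2 * (x ^ 2 - x + 1 / 6) : ℝ) : ℂ) := by
  convert hasSum_one_div_pow_mul_fourier_mul_bernoulliFun le_rfl hx using 1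
  · funext n
    rw [fourier_coe_apply, Real.fourierChar_apply]
    push_cast
    ring_nf
  · rw [bernoulliFun_two]
    push_cast
    rw [mul_pow, Complex.I_sq, Nat.factorial_two]
    push_cast
    ring

lemma hasSum_inv_sq_mul_fourierChar {x : ℝ} (hx : |x| ≤ 1) :
    HasSum (fun n : ℤ => 1 / (n : ℂ) ^ 2 * 𝐞 (-(n * x)))
      ((2 * Real.pi ^ 2 * (x ^ 2 - |x| + 1 / 6) : ℝ) : ℂ) := by
  rcases le_total 0 x with h | h
  · rw [abs_of_nonneg h] at hx ⊢
    rw [← (Equiv.neg ℤ).hasSum_iff]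
    simpa [Function.comp_def] using hasSum_inv_sq_mul_fourierChar_of_mem_Icc ⟨h, hx⟩
  · rw [abs_of_nonpos h] at hx ⊢
    simpa using hasSum_inv_sq_mul_fourierChar_of_mem_Icc (x := -x) ⟨by linarith, hx⟩

/-- The 1-periodic triangle of height `1 / ε` and base `2 * ε` centred at the integers. -/
def triangleWave (ε x : ℝ) : ℝ := max 0 (ε - |x - round x|) / ε ^ 2

/-- The Fourier coefficients of `triangleWave ε`. -/
def triangleCoeff (ε : ℝ) (n : ℤ) : ℝ := Real.sinc (Real.pi * (n * ε)) ^ 2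

section SmoothingKernel

variable {ε : ℝ}

lemma triangleCoeff_nonneg (ε : ℝ) (n : ℤ) : 0 ≤ triangleCoeff ε n := sq_nonneg _

lemma triangleCoeff_le_one (ε : ℝ) (n : ℤ) : triangleCoeff ε n ≤ 1 :=
  (sq_le_one_iff_abs_le_one _).2 (Real.abs_sinc_le_one _)

lemma triangleCoeff_zero (ε : ℝ) : triangleCoeff ε 0 = 1 := by simp [triangleCoeff]

lemma triangleCoeff_eq (hε : 0 < ε) {n : ℤ} (hn : n ≠ 0) :
    triangleCoeff ε n = 1 / (4 * Real.pi ^ 2 * ε ^ 2) *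
      (4 * Real.sin (Real.pi * (n * ε)) ^ 2 * (1 / (n : ℝ) ^ 2)) := by
  have hn' : (n : ℝ) ≠ 0 := by exact_mod_cast hn
  rw [triangleCoeff, Real.sinc_of_ne_zero (by positivity)]
  field_simp

lemma triangleCoeff_le (hε : 0 < ε) {n : ℤ} (hn : n ≠ 0) :
    triangleCoeff ε n ≤ (1 / ε / n) ^ 2 := by
  have hn' : (n : ℝ) ≠ 0 := by exact_mod_cast hn
  have hpi : 1 ≤ Real.pi := by linarith [Real.pi_gt_three]
  rw [triangleCoeff, Real.sinc_of_ne_zero (by positivity), div_pow]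
  calc _ ≤ 1 / (Real.pi * (n * ε)) ^ 2 := by
        gcongr
        exact Real.sin_sq_le_one _
    _ ≤ 1 / (1 * (n * ε)) ^ 2 := by
        rw [mul_pow, mul_pow 1]
        gcongr
    _ = _ := by field_simp

lemma summable_triangleCoeff (hε : 0 < ε) : Summable (triangleCoeff ε) := by
  have hfin : (Function.support fun n : ℤ => if n = 0 then (1 : ℝ) else 0).Finite :=
    (Set.finite_singleton 0).subset fun n hn => by
      by_contra h
      simp_all
  refine Summable.of_nonneg_of_le (triangleCoeff_nonneg ε) (fun n => ?_)
    (((Real.summable_one_div_int_pow.2 one_lt_two).mul_left (1 / ε ^ 2)).add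
      (summable_of_hasFiniteSupport hfin))
  by_cases hn : n = 0
  · simp [hn, triangleCoeff_zero]
  · refine (triangleCoeff_le hε hn).trans (le_of_eq ?_)
    rw [if_neg hn, add_zero]
    field_simp

lemma triangleCoeff_le_cutoff (hε : 0 < ε) {n : ℤ} (hn : n ≠ 0) :
    triangleCoeff ε n ≤ cutoff (1 / ε) n.natAbs := by
  refine le_min (triangleCoeff_le_one _ _) ((triangleCoeff_le hε hn).trans (le_of_eq ?_))
  rw [div_pow (1 / ε), div_pow (1 / ε), Nat.cast_natAbs, Int.cast_abs, sq_abs]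

lemma two_mul_max_zero_sub_abs (hε : 0 ≤ ε) (y : ℝ) :
    2 * max 0 (ε - |y|) = |y + ε| + |y - ε| - 2 * |y| := by
  rcases abs_cases y with ⟨hy, _⟩ | ⟨hy, _⟩ <;> rcases abs_cases (y + ε) with ⟨h₁, _⟩ | ⟨h₁, _⟩ <;>
    rcases abs_cases (y - ε) with ⟨h₂, _⟩ | ⟨h₂, _⟩ <;>
      rcases max_cases 0 (ε - |y|) with ⟨h, _⟩ | ⟨h, _⟩ <;> linarith

lemma fourierChar_intCast (n : ℤ) : 𝐞 (n : ℝ) = 1 := by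
  rw [Real.fourierChar_apply', mul_comm, Circle.exp_int_mul_two_pi]

/-- The triangle is a second difference of the quadratic `x ^ 2 - |x| + 1 / 6`, whose Fourier
coefficients are multiples of `1 / n ^ 2`. -/
lemma hasSum_triangleWave (hε : 0 < ε) (hε2 : ε ≤ 1 / 2) (x : ℝ) :
    HasSum (fun n : ℤ => (triangleCoeff ε n : ℂ) * 𝐞 (-(n * x))) (triangleWave ε x) := by
  obtain ⟨y, hy⟩ : ∃ y, y = x - round x := ⟨_, rfl⟩
  obtain ⟨c, hc⟩ : ∃ c, c = 1 / (4 * Real.pi ^ 2 * ε ^ 2) := ⟨_, rfl⟩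
  have hy' := abs_le.1 (abs_sub_round x)
  rw [← hy] at hy'
  have hquad {z : ℝ} (h₁ : -1 ≤ z) (h₂ : z ≤ 1) :=
    hasSum_inv_sq_mul_fourierChar (abs_le.2 ⟨h₁, h₂⟩)
  have hseries := (((((hquad (z := y) (by linarith) (by linarith)).mul_left 2).sub
    (hquad (z := y + ε) (by linarith) (by linarith))).sub
      (hquad (z := y - ε) (by linarith) (by linarith))).mul_left (c : ℂ)).add
        (hasSum_ite_eq (0 : ℤ) (1 : ℂ))
  have hchar (n : ℤ) : 𝐞 (-(n * x)) = 𝐞 (-(n * y)) := by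
    rw [show -((n : ℝ) * x) = -(n * y) + ((-(n * round x) : ℤ) : ℝ) by rw [hy]; push_cast; ring,
      AddChar.map_add_eq_mul, fourierChar_intCast, mul_one]
  have hterm (n : ℤ) : (triangleCoeff ε n : ℂ) * 𝐞 (-(n * x)) =
      c * (2 * (1 / (n : ℂ) ^ 2 * 𝐞 (-(n * y))) - 1 / (n : ℂ) ^ 2 * 𝐞 (-(n * (y + ε))) -
        1 / (n : ℂ) ^ 2 * 𝐞 (-(n * (y - ε)))) + if n = 0 then 1 else 0 := by
    rw [hchar]
    by_cases hn : n = 0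
    · simp [hn, triangleCoeff_zero]
    · rw [triangleCoeff_eq hε hn, ← hc, if_neg hn, add_zero,
        show -((n : ℝ) * (y + ε)) = -(n * y) + -(n * ε) by ring,
        show -((n : ℝ) * (y - ε)) = -(n * y) + n * ε by ring, AddChar.map_add_eq_mul,
        AddChar.map_add_eq_mul, Complex.ofReal_mul, Complex.ofReal_mul, ← two_sub_fourierChar_sub]
      push_cast
      ring
  have hvalue : triangleWave ε x = c * (2 * (2 * Real.pi ^ 2 * (y ^ 2 - |y| + 1 / 6)) -
      2 * Real.pi ^ 2 * ((y + ε) ^ 2 - |y + ε| + 1 / 6) -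
        2 * Real.pi ^ 2 * ((y - ε) ^ 2 - |y - ε| + 1 / 6)) + 1 := by
    have habs : |y + ε| = 2 * max 0 (ε - |y|) - |y - ε| + 2 * |y| := by
      rw [two_mul_max_zero_sub_abs hε.le]
      ring
    rw [triangleWave, ← hy, habs, hc]
    field_simp
    ring
  simp_rw [hterm]
  rw [hvalue]
  exact_mod_cast hseries

lemma triangleWave_nonneg (ε x : ℝ) : 0 ≤ triangleWave ε x := by
  unfold triangleWave
  positivity

lemma measurable_triangleWave (ε : ℝ) : Measurable (triangleWave ε) := by
  have : Measurable fun x : ℝ => ((round x : ℤ) : ℝ) := by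
    simp_rw [round_eq]
    fun_prop
  unfold triangleWave
  fun_prop

lemma triangleWave_le (hε : 0 < ε) (x : ℝ) : triangleWave ε x ≤ 1 / ε := by
  rw [triangleWave, div_le_iff₀ (by positivity), show 1 / ε * ε ^ 2 = ε by field_simp]
  exact max_le hε.le (by linarith [abs_nonneg (x - round x)])

lemma abs_sub_round_lt_of_triangleWave_ne_zero {x : ℝ} (h : triangleWave ε x ≠ 0) :
    |x - round x| < ε := by
  contrapose! h
  rw [triangleWave, max_eq_left (by linarith), zero_div]

lemma intervalIntegral_sub_abs (hε : 0 ≤ ε) : ∫ x in -ε..ε, (ε - |x|) = ε ^ 2 := by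
  have hint (a b : ℝ) : IntervalIntegrable (fun x => ε - |x|) volume a b :=
    Continuous.intervalIntegrable (by fun_prop) _ _
  have hright : ∫ x in (0 : ℝ)..ε, (ε - |x|) = ε ^ 2 / 2 := by
    rw [intervalIntegral.integral_congr (g := fun x => ε - x) fun x hx => by
      rw [uIcc_of_le hε] at hx
      simp [abs_of_nonneg hx.1],
      intervalIntegral.integral_sub (by simp) (by simp), integral_id,
      intervalIntegral.integral_const, smul_eq_mul]
    ring
  have hleft : ∫ x in -ε..0, (ε - |x|) = ε ^ 2 / 2 := by
    rw [← hright]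
    simpa using (intervalIntegral.integral_comp_neg (fun x => ε - |x|) (a := 0) (b := ε)).symm
  rw [← intervalIntegral.integral_add_adjacent_intervals (hint _ 0) (hint _ _), hleft, hright]
  ring

lemma integral_triangleWave_ball (hε : 0 < ε) (hε2 : ε ≤ 1 / 2) (n : ℤ) :
    ∫ x in Metric.ball (n : ℝ) ε, triangleWave ε x = 1 := by
  have hround : EqOn (triangleWave ε) (fun x => (ε - |x - n|) / ε ^ 2) (Metric.ball (n : ℝ) ε) :=
    fun x hx => by
      rw [Real.ball_eq_Ioo] at hx
      have hn : round x = n := by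
        rw [round_eq, Int.floor_eq_iff]
        constructor <;> linarith [hx.1, hx.2]
      have : |x - n| ≤ ε := abs_le.2 ⟨by linarith [hx.1], by linarith [hx.2]⟩
      rw [triangleWave, hn, max_eq_right (by linarith)]
  rw [setIntegral_congr_fun measurableSet_ball hround, Real.ball_eq_Ioo,
    ← integral_Ioc_eq_integral_Ioo, ← intervalIntegral.integral_of_le (by linarith),
    intervalIntegral.integral_comp_sub_right (fun x => (ε - |x|) / ε ^ 2),
    intervalIntegral.integral_div, sub_sub_cancel_left, add_sub_cancel_left,
    intervalIntegral_sub_abs hε.le, div_self (by positivity)]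

/-- The smoothing kernel at scale `ε`, periodized over the lattice `ℤ × ℤ`. -/
def smoothingKernel (ε : ℝ) (x : ℝ × ℝ) : ℝ := triangleWave ε x.1 * triangleWave ε x.2

/-- The Fourier coefficients of `smoothingKernel ε`. -/
def smoothingCoeff (ε : ℝ) (k : ℤ × ℤ) : ℝ := triangleCoeff ε k.1 * triangleCoeff ε k.2

/-- The standard pairing of an integer vector with a point of the plane. -/
def latticePairing (k : ℤ × ℤ) (x : ℝ × ℝ) : ℝ := k.1 * x.1 + k.2 * x.2

lemma smoothingCoeff_nonneg (ε : ℝ) (k : ℤ × ℤ) : 0 ≤ smoothingCoeff ε k :=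
  mul_nonneg (triangleCoeff_nonneg _ _) (triangleCoeff_nonneg _ _)

lemma smoothingCoeff_zero (ε : ℝ) : smoothingCoeff ε 0 = 1 := by
  simp [smoothingCoeff, triangleCoeff_zero]

lemma summable_smoothingCoeff (hε : 0 < ε) : Summable (smoothingCoeff ε) :=
  (summable_triangleCoeff hε).mul_of_nonneg (summable_triangleCoeff hε) (triangleCoeff_nonneg ε)
    (triangleCoeff_nonneg ε)

lemma smoothingCoeff_le_cutoff (hε : 0 < ε) {k : ℤ × ℤ} (hk : k ≠ 0) :
    smoothingCoeff ε k ≤ cutoff (1 / ε) (supNatAbs k) := by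
  have hpos := supNatAbs_pos hk
  rcases le_total k.1.natAbs k.2.natAbs with h | h
  · rw [show supNatAbs k = k.2.natAbs from max_eq_right h] at hpos ⊢
    exact (mul_le_of_le_one_left (triangleCoeff_nonneg _ _) (triangleCoeff_le_one _ _)).trans
      (triangleCoeff_le_cutoff hε (Int.natAbs_pos.1 hpos))
  · rw [show supNatAbs k = k.1.natAbs from max_eq_left h] at hpos ⊢
    exact (mul_le_of_le_one_right (triangleCoeff_nonneg _ _) (triangleCoeff_le_one _ _)).trans
      (triangleCoeff_le_cutoff hε (Int.natAbs_pos.1 hpos))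

lemma hasSum_smoothingKernel (hε : 0 < ε) (hε2 : ε ≤ 1 / 2) (x : ℝ × ℝ) :
    HasSum (fun k : ℤ × ℤ => (smoothingCoeff ε k : ℂ) * 𝐞 (-latticePairing k x))
      (smoothingKernel ε x) := by
  have hnorm (x : ℝ) : Summable fun n : ℤ => ‖(triangleCoeff ε n : ℂ) * 𝐞 (-(n * x))‖ := by
    simpa [Circle.norm_coe, abs_of_nonneg (triangleCoeff_nonneg ε _)] using
      summable_triangleCoeff hε
  have hprod := (hasSum_triangleWave hε hε2 x.1).mul (hasSum_triangleWave hε hε2 x.2)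
    (summable_mul_of_summable_norm (f := fun n : ℤ => (triangleCoeff ε n : ℂ) * 𝐞 (-(n * x.1)))
      (g := fun n : ℤ => (triangleCoeff ε n : ℂ) * 𝐞 (-(n * x.2))) (hnorm x.1) (hnorm x.2))
  rw [smoothingKernel, Complex.ofReal_mul]
  have hterm (k : ℤ × ℤ) : (smoothingCoeff ε k : ℂ) * 𝐞 (-latticePairing k x) =
      (triangleCoeff ε k.1 * 𝐞 (-(k.1 * x.1))) * (triangleCoeff ε k.2 * 𝐞 (-(k.2 * x.2))) := by
    rw [smoothingCoeff, latticePairing, neg_add, AddChar.map_add_eq_mul,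
      Complex.ofReal_mul, Circle.coe_mul]
    ring
  simpa only [hterm] using hprod

lemma smoothingKernel_nonneg (ε : ℝ) (x : ℝ × ℝ) : 0 ≤ smoothingKernel ε x :=
  mul_nonneg (triangleWave_nonneg _ _) (triangleWave_nonneg _ _)

lemma measurable_smoothingKernel (ε : ℝ) : Measurable (smoothingKernel ε) :=
  ((measurable_triangleWave ε).comp measurable_fst).mul
    ((measurable_triangleWave ε).comp measurable_snd)

lemma integrableOn_smoothingKernel (hε : 0 < ε) {T : Set (ℝ × ℝ)} (hT : volume T ≠ ⊤) :
    IntegrableOn (smoothingKernel ε) T :=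
  Measure.integrableOn_of_bounded (M := 1 / ε * (1 / ε)) hT
    (measurable_smoothingKernel ε).aestronglyMeasurable (Filter.Eventually.of_forall fun x => by
      rw [Real.norm_of_nonneg (smoothingKernel_nonneg _ _)]
      exact mul_le_mul (triangleWave_le hε _) (triangleWave_le hε _) (triangleWave_nonneg _ _)
        (by positivity))

lemma integral_smoothingKernel_ball (hε : 0 < ε) (hε2 : ε ≤ 1 / 2) (n : ℤ × ℤ) :
    ∫ x in Metric.ball (latticePt n) ε, smoothingKernel ε x = 1 := by
  unfold latticePt smoothingKernel
  rw [← ball_prod_same, Measure.volume_eq_prod, setIntegral_prod_mul,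
    integral_triangleWave_ball hε hε2, integral_triangleWave_ball hε hε2, one_mul]

lemma one_le_dist_latticePt {k l : ℤ × ℤ} (h : k ≠ l) : 1 ≤ dist (latticePt k) (latticePt l) := by
  have hsub : latticePt k - latticePt l = latticePt (k - l) := by simp [latticePt]
  rw [dist_eq_norm, hsub, norm_latticePt]
  exact_mod_cast supNatAbs_pos (sub_ne_zero.2 h)

lemma integral_smoothingKernel_iUnion_ball (hε : 0 < ε) (hε2 : ε ≤ 1 / 2)
    (F : Finset (ℤ × ℤ)) :
    ∫ x in ⋃ n ∈ F, Metric.ball (latticePt n) ε, smoothingKernel ε x = F.card := by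
  rw [integral_biUnion_finset F (fun _ _ => measurableSet_ball)
    (fun k _ l _ h => Metric.ball_disjoint_ball (by linarith [one_le_dist_latticePt h]))
    (fun n _ => integrableOn_smoothingKernel hε measure_ball_lt_top.ne)]
  simp [integral_smoothingKernel_ball hε hε2]

lemma card_le_integral_smoothingKernel (hε : 0 < ε) (hε2 : ε ≤ 1 / 2) {T : Set (ℝ × ℝ)}
    (hT : volume T ≠ ⊤) {F : Finset (ℤ × ℤ)} (h : ∀ n ∈ F, Metric.ball (latticePt n) ε ⊆ T) :
    (F.card : ℝ) ≤ ∫ x in T, smoothingKernel ε x := by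
  rw [← integral_smoothingKernel_iUnion_ball hε hε2 F]
  exact setIntegral_mono_set (integrableOn_smoothingKernel hε hT)
    (Filter.Eventually.of_forall fun x => smoothingKernel_nonneg _ _)
    (LE.le.eventuallyLE (iUnion₂_subset h))

lemma mem_ball_round_of_smoothingKernel_ne_zero {x : ℝ × ℝ} (h : smoothingKernel ε x ≠ 0) :
    x ∈ Metric.ball (latticePt (round x.1, round x.2)) ε := by
  rw [Metric.mem_ball, Prod.dist_eq, max_lt_iff]
  exact ⟨abs_sub_round_lt_of_triangleWave_ne_zero (left_ne_zero_of_mul h),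
    abs_sub_round_lt_of_triangleWave_ne_zero (right_ne_zero_of_mul h)⟩

lemma integral_smoothingKernel_le_card (hε : 0 < ε) (hε2 : ε ≤ 1 / 2) {T : Set (ℝ × ℝ)}
    (hT : MeasurableSet T) {F : Finset (ℤ × ℤ)}
    (h : ∀ n, (Metric.ball (latticePt n) ε ∩ T).Nonempty → n ∈ F) :
    ∫ x in T, smoothingKernel ε x ≤ (F.card : ℝ) := by
  rw [← integral_smoothingKernel_iUnion_ball hε hε2 F]
  set U := ⋃ n ∈ F, Metric.ball (latticePt n) ε
  have hU : volume U ≠ ⊤ :=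
    (measure_biUnion_lt_top F.finite_toSet fun n _ => measure_ball_lt_top).ne
  have hzero : ∀ x ∈ T \ (T ∩ U), smoothingKernel ε x = 0 := fun x ⟨hx, hx'⟩ => by
    by_contra hne
    have hball := mem_ball_round_of_smoothingKernel_ne_zero hne
    exact hx' ⟨hx, mem_iUnion₂.2 ⟨_, h _ ⟨x, hball, hx⟩, hball⟩⟩
  rw [setIntegral_eq_of_subset_of_forall_sdiff_eq_zero hT inter_subset_left hzero]
  exact setIntegral_mono_set (integrableOn_smoothingKernel hε hU)
    (Filter.Eventually.of_forall fun x => smoothingKernel_nonneg _ _)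
    (LE.le.eventuallyLE inter_subset_right)

end SmoothingKernel

/-! ### Smoothing the lattice point count -/

/-- A bounded open convex set containing the open ball of radius `r` around the origin. -/
structure IsConvexDomain {E : Type*} [NormedAddCommGroup E] [NormedSpace ℝ E] (D : Set E) (r : ℝ) :
    Prop where
  convex : Convex ℝ D
  isOpen : IsOpen D
  isBounded : Bornology.IsBounded D
  r_pos : 0 < r
  ball_subset : Metric.ball 0 r ⊆ D

/-- The number of lattice points in `t • D`. -/
def dilateCount (D : Set (ℝ × ℝ)) (t : ℝ) : ℕ := Nat.card {n : ℤ × ℤ | latticePt n ∈ t • D}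

/-- The Fourier transform of the indicator function of `D` at `t * k`. -/
def indicatorFourier (D : Set (ℝ × ℝ)) (k : ℤ × ℤ) (t : ℝ) : ℂ :=
  ∫ x in D, 𝐞 (-(t * latticePairing k x))

/-- A finite part of the Fourier series of the lattice point count of `t • D`, smoothed at
scale `ε`. -/
def smoothedSum (D : Set (ℝ × ℝ)) (ε : ℝ) (S : Finset (ℤ × ℤ)) (t : ℝ) : ℂ :=
  ∑ k ∈ S, (smoothingCoeff ε k : ℂ) * (((t ^ 2 : ℝ) : ℂ) * indicatorFourier D k t)

lemma continuous_latticePairing (k : ℤ × ℤ) : Continuous (latticePairing k) := by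
  unfold latticePairing
  fun_prop

lemma integral_smul_fourierChar {D : Set (ℝ × ℝ)} (k : ℤ × ℤ) {t : ℝ} (ht : 0 < t) :
    ∫ x in t • D, (𝐞 (-latticePairing k x) : ℂ) =
      ((t ^ 2 : ℝ) : ℂ) * indicatorFourier D k t := by
  have hsmul (x : ℝ × ℝ) : t * latticePairing k x = latticePairing k (t • x) := by
    simp only [latticePairing, Prod.smul_fst, Prod.smul_snd, smul_eq_mul]
    ring
  simp_rw [indicatorFourier, hsmul]
  rw [Measure.setIntegral_comp_smul_of_pos volume (fun x => (𝐞 (-latticePairing k x) : ℂ)) D ht,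
    Module.finrank_prod, Module.finrank_self, Complex.real_smul, ← mul_assoc,
    ← Complex.ofReal_mul, mul_inv_cancel₀ (by positivity), Complex.ofReal_one, one_mul]

lemma finite_latticePt_mem {T : Set (ℝ × ℝ)} (hT : Bornology.IsBounded T) :
    {n : ℤ × ℤ | latticePt n ∈ T}.Finite := by
  obtain ⟨B, hB⟩ := hT.subset_closedBall 0
  refine ((finite_Icc (-⌈B⌉) ⌈B⌉).prod (finite_Icc (-⌈B⌉) ⌈B⌉)).subset fun n hn => ?_
  have hnorm := hB hn
  rw [mem_closedBall_zero_iff, Prod.norm_def, max_le_iff] at hnorm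
  have hmem (m : ℤ) (hm : |(m : ℝ)| ≤ B) : m ∈ Icc (-⌈B⌉) ⌈B⌉ :=
    abs_le.1 (by exact_mod_cast hm.trans (Int.le_ceil B))
  exact ⟨hmem _ hnorm.1, hmem _ hnorm.2⟩

namespace IsConvexDomain

variable {D : Set (ℝ × ℝ)} {r t ε : ℝ}

lemma finite_latticePt_mem_smul (h : IsConvexDomain D r) (t : ℝ) :
    {n : ℤ × ℤ | latticePt n ∈ t • D}.Finite :=
  finite_latticePt_mem (h.isBounded.smul₀ t)

lemma dilateCount_eq (h : IsConvexDomain D r) (t : ℝ) :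
    dilateCount D t = (h.finite_latticePt_mem_smul t).toFinset.card := by
  rw [dilateCount, Nat.card_coe_set_eq, ncard_eq_toFinset_card _ (h.finite_latticePt_mem_smul t)]

lemma volume_smul_ne_top (h : IsConvexDomain D r) (t : ℝ) : volume (t • D) ≠ ⊤ :=
  (h.isBounded.smul₀ t).measure_lt_top.ne

lemma measurableSet_smul (h : IsConvexDomain D r) (ht : 0 < t) : MeasurableSet (t • D) :=
  (h.isOpen.smul₀ ht.ne').measurableSet

lemma mem_smul_of_dist_lt {E : Type*} [NormedAddCommGroup E] [NormedSpace ℝ E] {D : Set E}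
    (h : IsConvexDomain D r) (ht : 0 ≤ t) (hε : 0 < ε) {x y : E}
    (hx : x ∈ t • D) (hy : dist y x < ε) : y ∈ (t + ε / r) • D := by
  have hr := h.r_pos
  rw [h.convex.add_smul ht (by positivity)]
  refine ⟨x, hx, y - x, ?_, by simp⟩
  rw [mem_smul_set_iff_inv_smul_mem₀ (by positivity)]
  apply h.ball_subset
  rw [mem_ball_zero_iff, norm_smul, Real.norm_of_nonneg (by positivity), inv_div, ← dist_eq_norm]
  calc r / ε * dist y x < r / ε * ε := by gcongr
    _ = r := by field_simp

lemma dilateCount_le_integral (h : IsConvexDomain D r) (ht : 0 ≤ t) (hε : 0 < ε)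
    (hε2 : ε ≤ 1 / 2) :
    (dilateCount D t : ℝ) ≤ ∫ x in (t + ε / r) • D, smoothingKernel ε x := by
  rw [h.dilateCount_eq]
  exact card_le_integral_smoothingKernel hε hε2 (h.volume_smul_ne_top _) fun n hn y hy =>
    h.mem_smul_of_dist_lt ht hε ((h.finite_latticePt_mem_smul t).mem_toFinset.1 hn) hy

lemma integral_le_dilateCount (h : IsConvexDomain D r) (hε : 0 < ε) (hε2 : ε ≤ 1 / 2)
    (ht : ε / r < t) :
    ∫ x in (t - ε / r) • D, smoothingKernel ε x ≤ (dilateCount D t : ℝ) := by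
  rw [h.dilateCount_eq]
  refine integral_smoothingKernel_le_card hε hε2 (h.measurableSet_smul (by linarith))
    fun n ⟨y, hy, hyD⟩ => ?_
  have := h.mem_smul_of_dist_lt (by linarith) hε hyD (y := latticePt n) (by rwa [dist_comm])
  rw [sub_add_cancel] at this
  exact (h.finite_latticePt_mem_smul t).mem_toFinset.2 this

lemma norm_indicatorFourier_le (h : IsConvexDomain D r) (k : ℤ × ℤ) (t : ℝ) :
    ‖indicatorFourier D k t‖ ≤ volume.real D := by
  simpa [indicatorFourier] using norm_setIntegral_le_of_norm_le_const
    (f := fun x => (𝐞 (-(t * latticePairing k x)) : ℂ)) h.isBounded.measure_lt_top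
      fun x _ => (Circle.norm_coe _).le

lemma hasSum_integral_smul (h : IsConvexDomain D r) (ht : 0 < t) (hε : 0 < ε) (hε2 : ε ≤ 1 / 2) :
    HasSum (fun k : ℤ × ℤ =>
        (smoothingCoeff ε k : ℂ) * (((t ^ 2 : ℝ) : ℂ) * indicatorFourier D k t))
      ((∫ x in t • D, smoothingKernel ε x : ℝ) : ℂ) := by
  have hfin : IsFiniteMeasure (volume.restrict (t • D)) :=
    isFiniteMeasure_restrict.2 (h.volume_smul_ne_top t)
  have hint (k : ℤ × ℤ) : Integrable
      (fun x => (smoothingCoeff ε k : ℂ) * 𝐞 (-latticePairing k x)) (volume.restrict (t • D)) := by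
    refine Integrable.of_bound (C := smoothingCoeff ε k) (Continuous.aestronglyMeasurable ?_)
      (Filter.Eventually.of_forall fun x => ?_)
    · exact continuous_const.mul (continuous_subtype_val.comp
        (Real.continuous_fourierChar.comp (continuous_latticePairing k).neg))
    · simp [Circle.norm_coe, abs_of_nonneg (smoothingCoeff_nonneg ε k)]
  have hsummable : Summable fun k : ℤ × ℤ =>
      ∫ x in t • D, ‖(smoothingCoeff ε k : ℂ) * 𝐞 (-latticePairing k x)‖ := by
    simpa [Circle.norm_coe, abs_of_nonneg (smoothingCoeff_nonneg ε _), mul_comm] using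
      (summable_smoothingCoeff hε).mul_right (volume.real (t • D))
  have hterm (k : ℤ × ℤ) :
      ∫ x in t • D, (smoothingCoeff ε k : ℂ) * 𝐞 (-latticePairing k x) =
        (smoothingCoeff ε k : ℂ) * (((t ^ 2 : ℝ) : ℂ) * indicatorFourier D k t) := by
    rw [integral_const_mul, integral_smul_fourierChar k ht]
  have hkernel : ∫ x in t • D, ∑' k : ℤ × ℤ, (smoothingCoeff ε k : ℂ) * 𝐞 (-latticePairing k x) =
      ((∫ x in t • D, smoothingKernel ε x : ℝ) : ℂ) := by
    simp_rw [(hasSum_smoothingKernel hε hε2 _).tsum_eq]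
    exact integral_complex_ofReal
  rw [← hkernel]
  simpa only [hterm] using hasSum_integral_of_summable_integral_norm hint hsummable

lemma norm_integral_sub_smoothedSum_le (h : IsConvexDomain D r) (ht : 0 < t) (hε : 0 < ε)
    (hε2 : ε ≤ 1 / 2) (S : Finset (ℤ × ℤ)) :
    ‖((∫ x in t • D, smoothingKernel ε x : ℝ) : ℂ) - smoothedSum D ε S t‖ ≤
      (∑' k, smoothingCoeff ε k - ∑ k ∈ S, smoothingCoeff ε k) * (t ^ 2 * volume.real D) := by
  have htail := (S.hasSum_compl_iff (a := _ - smoothedSum D ε S t)).2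
    (by rw [smoothedSum, sub_add_cancel]; exact h.hasSum_integral_smul ht hε hε2)
  have htail' := ((S.hasSum_compl_iff (a := _ - ∑ k ∈ S, smoothingCoeff ε k)).2
    (by rw [sub_add_cancel]; exact (summable_smoothingCoeff hε).hasSum)).mul_right
      (t ^ 2 * volume.real D)
  refine htail.norm_le_of_bounded htail' fun k => ?_
  have hk := smoothingCoeff_nonneg ε k
  simp only [norm_mul, Complex.norm_real, Real.norm_eq_abs]
  rw [abs_of_nonneg hk, abs_of_nonneg (sq_nonneg t)]
  gcongr
  exact h.norm_indicatorFourier_le k t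

lemma smoothedSum_erase_zero {S : Finset (ℤ × ℤ)} (hS : 0 ∈ S) :
    smoothedSum D ε S t = (t ^ 2 * volume.real D : ℝ) + smoothedSum D ε (S.erase 0) t := by
  rw [smoothedSum, ← Finset.add_sum_erase S _ hS, smoothingCoeff_zero]
  simp [indicatorFourier, latticePairing, smoothedSum]

lemma exists_smoothedSum_le (h : IsConvexDomain D r) (hε : 0 < ε) (hε2 : ε ≤ 1 / 2) (T : ℝ) :
    ∃ S : Finset (ℤ × ℤ), 0 ∉ S ∧ ∀ t, 0 < t → t ≤ T →
      |(∫ x in t • D, smoothingKernel ε x) - t ^ 2 * volume.real D| ≤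
        1 + ‖smoothedSum D ε S t‖ := by
  have hpos : 0 < 1 / (T ^ 2 * volume.real D + 1) := by positivity
  obtain ⟨S, hS0, hS⟩ := ((Filter.eventually_ge_atTop {0}).and
    ((summable_smoothingCoeff hε).hasSum.eventually (lt_mem_nhds (sub_lt_self _ hpos)))).exists
  refine ⟨S.erase 0, S.notMem_erase 0, fun t ht htT => ?_⟩
  have hle : t ^ 2 * volume.real D ≤ T ^ 2 * volume.real D + 1 := by
    have : t ^ 2 * volume.real D ≤ T ^ 2 * volume.real D := by gcongr
    linarith
  have htail := calc
    _ ≤ _ := h.norm_integral_sub_smoothedSum_le ht hε hε2 S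
    _ ≤ 1 / (T ^ 2 * volume.real D + 1) * (T ^ 2 * volume.real D + 1) := by
        gcongr
        linarith
    _ = 1 := by field_simp
  rw [smoothedSum_erase_zero (hS0 (Finset.mem_singleton_self _)), ← sub_sub,
    ← Complex.ofReal_sub] at htail
  rw [← Real.norm_eq_abs, ← Complex.norm_real]
  linarith [norm_le_norm_add_norm_sub' (((∫ x in t • D, smoothingKernel ε x) -
    t ^ 2 * volume.real D : ℝ) : ℂ) (smoothedSum D ε (S.erase 0) t)]

lemma exists_abs_dilateCount_sub_le (h : IsConvexDomain D r) (hε : 0 < ε) (hε2 : ε ≤ 1 / 2)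
    (T : ℝ) : ∃ S : Finset (ℤ × ℤ), 0 ∉ S ∧ ∀ t, ε / r < t → t + ε / r ≤ T →
      |(dilateCount D t : ℝ) - t ^ 2 * volume.real D| ≤
        ‖smoothedSum D ε S (t + ε / r)‖ + ‖smoothedSum D ε S (t - ε / r)‖ +
          (1 + ε / r * (2 * t + ε / r) * volume.real D) := by
  obtain ⟨S, hS0, hS⟩ := h.exists_smoothedSum_le hε hε2 T
  refine ⟨S, hS0, fun t ht htT => ?_⟩
  have hr := h.r_pos
  have hc : 0 < ε / r := by positivity
  have hupper := h.dilateCount_le_integral (t := t) (by linarith) hε hε2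
  have hlower := h.integral_le_dilateCount hε hε2 ht
  set c := ε / r
  have hcV : 0 ≤ c ^ 2 * volume.real D := by positivity
  have hplus := (abs_le.1 (hS (t + c) (by linarith) htT)).2
  have hminus := (abs_le.1 (hS (t - c) (by linarith) (by linarith))).1
  have := norm_nonneg (smoothedSum D ε S (t + c))
  have := norm_nonneg (smoothedSum D ε S (t - c))
  rw [abs_le]
  constructor <;> nlinarith

lemma continuous_indicatorFourier (h : IsConvexDomain D r) (k : ℤ × ℤ) :
    Continuous (indicatorFourier D k) := by
  have : IsFiniteMeasure (volume.restrict D) :=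
    isFiniteMeasure_restrict.2 h.isBounded.measure_lt_top.ne
  have hcont : Continuous fun p : ℝ × (ℝ × ℝ) => (𝐞 (-(p.1 * latticePairing k p.2)) : ℂ) :=
    continuous_subtype_val.comp (Real.continuous_fourierChar.comp
      (continuous_fst.mul ((continuous_latticePairing k).comp continuous_snd)).neg)
  exact continuous_of_dominated (bound := fun _ => 1)
    (fun t => (hcont.comp (by fun_prop : Continuous fun x => (t, x))).aestronglyMeasurable)
    (fun t => .of_forall fun x => (Circle.norm_coe _).le) (integrable_const _)
    (.of_forall fun x => hcont.comp (by fun_prop : Continuous fun t => (t, x)))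

lemma continuous_smoothedSum (h : IsConvexDomain D r) (ε : ℝ) (S : Finset (ℤ × ℤ)) :
    Continuous (smoothedSum D ε S) := by
  have := h.continuous_indicatorFourier
  unfold smoothedSum
  fun_prop

end IsConvexDomain

/-! ### Chord lengths -/

section RealConvexSets

variable {Y Z : Set ℝ}

lemma csSup_mem_frontier (hne : Y.Nonempty) (hb : BddAbove Y) : sSup Y ∈ frontier Y := by
  refine ⟨csSup_mem_closure hne hb, fun hmem => ?_⟩
  obtain ⟨ε, hε, hball⟩ := Metric.mem_nhds_iff.1 (mem_interior_iff_mem_nhds.1 hmem)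
  have hmem' : sSup Y + ε / 2 ∈ Y := hball (by
    rw [Metric.mem_ball, Real.dist_eq, add_sub_cancel_left, abs_of_pos (half_pos hε)]
    exact half_lt_self hε)
  linarith [le_csSup hb hmem']

lemma csInf_mem_frontier (hne : Y.Nonempty) (hb : BddBelow Y) : sInf Y ∈ frontier Y := by
  have hneg := csSup_mem_frontier (Y := -Y) hne.neg hb.neg
  have hfrontier : frontier (-Y) = -frontier Y :=
    ((Homeomorph.neg ℝ).preimage_frontier Y).symm
  rwa [csSup_neg hne hb, hfrontier, neg_mem_neg] at hneg

lemma volume_real_eq_sSup_sub_sInf (hc : Convex ℝ Y) (hb : Bornology.IsBounded Y)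
    (hne : Y.Nonempty) : volume.real Y = sSup Y - sInf Y := by
  have hle : sInf Y ≤ sSup Y := csInf_le_csSup hne hb.bddBelow hb.bddAbove
  have hIoo : Ioo (sInf Y) (sSup Y) ⊆ Y :=
    IsConnected.Ioo_csInf_csSup_subset ⟨hne, hc.isPreconnected⟩ hb.bddBelow hb.bddAbove
  have hIcc : Y ⊆ Icc (sInf Y) (sSup Y) := subset_Icc_csInf_csSup hb.bddBelow hb.bddAbove
  refine le_antisymm ?_ ?_
  · rw [← Real.volume_real_Icc_of_le hle]
    exact measureReal_mono hIcc (by simp)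
  · rw [← Real.volume_real_Ioo_of_le hle]
    exact measureReal_mono hIoo hb.measure_lt_top.ne

lemma volume_real_smul_add_smul (hYc : Convex ℝ Y) (hYb : Bornology.IsBounded Y)
    (hY : Y.Nonempty) (hZc : Convex ℝ Z) (hZb : Bornology.IsBounded Z) (hZ : Z.Nonempty)
    {p q : ℝ} (hp : 0 ≤ p) (hq : 0 ≤ q) :
    volume.real (p • Y + q • Z) = p * volume.real Y + q * volume.real Z := by
  have hpY := hYb.smul₀ p
  have hqZ := hZb.smul₀ q
  rw [volume_real_eq_sSup_sub_sInf hYc hYb hY, volume_real_eq_sSup_sub_sInf hZc hZb hZ,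
    volume_real_eq_sSup_sub_sInf ((hYc.smul p).add (hZc.smul q)) (hpY.add hqZ)
      (hY.smul_set.add hZ.smul_set),
    csSup_add hY.smul_set hpY.bddAbove hZ.smul_set hqZ.bddAbove,
    csInf_add hY.smul_set hpY.bddBelow hZ.smul_set hqZ.bddBelow,
    Real.sSup_smul_of_nonneg hp, Real.sSup_smul_of_nonneg hq,
    Real.sInf_smul_of_nonneg hp, Real.sInf_smul_of_nonneg hq]
  simp only [smul_eq_mul]
  ring

end RealConvexSets

/-- The coordinates, along the second vector of the frame `e`, of the points of `Ω` whose
coordinate along the first vector is `s`. -/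
def chord (Ω : Set E2) (e : OrthonormalBasis (Fin 2) ℝ E2) (s : ℝ) : Set ℝ :=
  {y | s • e 0 + y • e 1 ∈ Ω}

section Frame

variable (e : OrthonormalBasis (Fin 2) ℝ E2)

lemma inner_smul_add_smul_fst (s y : ℝ) : ⟪s • e 0 + y • e 1, e 0⟫ = s := by
  simp [inner_add_left, inner_smul_left, e.inner_eq_zero]

lemma inner_smul_add_inner_smul (x : E2) : ⟪x, e 0⟫ • e 0 + ⟪x, e 1⟫ • e 1 = x := by
  simpa only [Fin.sum_univ_two, real_inner_comm] using e.sum_repr' x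

lemma exists_orthonormalBasis_fst_eq {u : E2} (hu : ‖u‖ = 1) :
    ∃ e : OrthonormalBasis (Fin 2) ℝ E2, e 0 = u := by
  obtain ⟨e, he⟩ := Orthonormal.exists_orthonormalBasis_extension_of_card_eq
    (𝕜 := ℝ) (ι := Fin 2) (v := fun _ => u) (s := {0}) (by simp)
    ⟨fun _ => hu, fun i j hij => (hij (Subsingleton.elim i j)).elim⟩
  exact ⟨e, he 0 rfl⟩

lemma chord_map_neg (Ω : Set E2) (s : ℝ) :
    chord Ω (e.map (LinearIsometryEquiv.neg ℝ)) (-s) = -chord Ω e s := by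
  ext y
  simp [chord]

end Frame

/-- `CurvBddBelow` with an explicit constant: caps of height `δ` have diameter at most `K * √δ`. -/
def HasCapDiamBound (Ω : Set E2) (K : ℝ) : Prop :=
  ∀ θ : E2, ‖θ‖ = 1 → ∀ δ : ℝ, 0 < δ → capDiam Ω θ δ ≤ K * √δ

lemma HasCapDiamBound.nonneg {Ω : Set E2} {K : ℝ} (hK : HasCapDiamBound Ω K) : 0 ≤ K := by
  simpa using Metric.diam_nonneg.trans (hK (EuclideanSpace.single 0 1) (by simp) 1 one_pos)

lemma suppFn_smul (Ω : Set E2) {c : ℝ} (hc : 0 ≤ c) (ξ : E2) :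
    suppFn Ω (c • ξ) = c * suppFn Ω ξ := by
  simp only [suppFn, inner_smul_right, ← smul_eq_mul, ← Real.sSup_smul_of_nonneg hc,
    ← image_smul, image_image]

namespace IsConvexDomain

variable {Ω : Set E2} {r : ℝ} (e : OrthonormalBasis (Fin 2) ℝ E2)

lemma zero_mem {E : Type*} [NormedAddCommGroup E] [NormedSpace ℝ E] {D : Set E}
    (h : IsConvexDomain D r) : 0 ∈ D :=
  h.ball_subset (Metric.mem_ball_self h.r_pos)

lemma inner_le_suppFn (h : IsConvexDomain Ω r) (ξ : E2) {x : E2} (hx : x ∈ Ω) :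
    ⟪x, ξ⟫ ≤ suppFn Ω ξ := by
  obtain ⟨B, hB⟩ := h.isBounded.exists_norm_le
  refine le_csSup ⟨B * ‖ξ‖, ?_⟩ (mem_image_of_mem _ hx)
  rintro _ ⟨y, hy, rfl⟩
  exact (real_inner_le_norm y ξ).trans (by gcongr; exact hB y hy)

lemma suppFn_le (h : IsConvexDomain Ω r) {ξ : E2} {c : ℝ} (hc : ∀ x ∈ Ω, ⟪x, ξ⟫ ≤ c) :
    suppFn Ω ξ ≤ c :=
  csSup_le ⟨_, mem_image_of_mem _ h.zero_mem⟩ (forall_mem_image.2 hc)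

lemma exists_lt_inner (h : IsConvexDomain Ω r) {ξ : E2} {c : ℝ} (hc : c < suppFn Ω ξ) :
    ∃ x ∈ Ω, c < ⟪x, ξ⟫ :=
  exists_mem_image.1 (exists_lt_of_lt_csSup ⟨_, mem_image_of_mem _ h.zero_mem⟩ hc)

lemma mul_norm_le_suppFn (h : IsConvexDomain Ω r) (ξ : E2) : r * ‖ξ‖ ≤ suppFn Ω ξ := by
  rcases eq_or_ne ξ 0 with rfl | hξ
  · simpa using h.inner_le_suppFn 0 h.zero_mem
  have hclosure : closure Ω ⊆ {x | ⟪x, ξ⟫ ≤ suppFn Ω ξ} :=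
    closure_minimal (fun x => h.inner_le_suppFn ξ) (isClosed_le (by fun_prop) (by fun_prop))
  have hmem : (r / ‖ξ‖) • ξ ∈ closure Ω := by
    refine closure_mono h.ball_subset ?_
    rw [closure_ball 0 h.r_pos.ne', mem_closedBall_zero_iff, norm_smul, norm_div, norm_norm,
      Real.norm_of_nonneg h.r_pos.le, div_mul_cancel₀ _ (norm_ne_zero_iff.2 hξ)]
  calc r * ‖ξ‖ = ⟪(r / ‖ξ‖) • ξ, ξ⟫ := by
        rw [real_inner_smul_left, real_inner_self_eq_norm_sq]
        field_simp
    _ ≤ suppFn Ω ξ := hclosure hmem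

lemma suppFn_pos (h : IsConvexDomain Ω r) {ξ : E2} (hξ : ξ ≠ 0) : 0 < suppFn Ω ξ :=
  (mul_pos h.r_pos (norm_pos_iff.2 hξ)).trans_le (h.mul_norm_le_suppFn ξ)

lemma smul_chord_add_smul_chord_subset (h : IsConvexDomain Ω r) {p q : ℝ} (hp : 0 ≤ p)
    (hq : 0 ≤ q) (hpq : p + q = 1) (s t : ℝ) :
    p • chord Ω e s + q • chord Ω e t ⊆ chord Ω e (p * s + q * t) := by
  rintro _ ⟨_, ⟨y, hy, rfl⟩, _, ⟨z, hz, rfl⟩, rfl⟩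
  have hcomb : (p * s + q * t) • e 0 + (p * y + q * z) • e 1 =
      p • (s • e 0 + y • e 1) + q • (t • e 0 + z • e 1) := by module
  change (p * s + q * t) • e 0 + (p * y + q * z) • e 1 ∈ Ω
  rw [hcomb]
  exact h.convex hy hz hp hq hpq

lemma convex_chord (h : IsConvexDomain Ω r) (s : ℝ) : Convex ℝ (chord Ω e s) :=
  convex_iff_pointwise_add_subset.2 fun p q hp hq hpq => by
    simpa only [← add_mul, hpq, one_mul] using
      h.smul_chord_add_smul_chord_subset e hp hq hpq s s

lemma isBounded_chord (h : IsConvexDomain Ω r) (s : ℝ) : Bornology.IsBounded (chord Ω e s) := by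
  obtain ⟨B, hB⟩ := h.isBounded.exists_norm_le
  refine isBounded_iff_forall_norm_le.2 ⟨B, fun y hy => ?_⟩
  have hcoord : ⟪s • e 0 + y • e 1, e 1⟫ = y := by
    simp [inner_add_left, inner_smul_left, e.inner_eq_zero]
  calc ‖y‖ = ‖⟪s • e 0 + y • e 1, e 1⟫‖ := by rw [hcoord]
    _ ≤ ‖s • e 0 + y • e 1‖ * ‖e 1‖ := norm_inner_le_norm _ _
    _ ≤ B := by rw [e.norm_eq_one, mul_one]; exact hB _ hy

lemma chord_nonempty (h : IsConvexDomain Ω r) {s : ℝ}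
    (hs : s ∈ Ioo (-suppFn Ω (-e 0)) (suppFn Ω (e 0))) : (chord Ω e s).Nonempty := by
  obtain ⟨x, hx, hsx⟩ := h.exists_lt_inner hs.2
  obtain ⟨z, hz, hzs⟩ := h.exists_lt_inner (neg_lt.1 hs.1)
  rw [inner_neg_right, neg_lt_neg_iff] at hzs
  obtain ⟨w, hw, hws⟩ := h.convex.isPreconnected.intermediate_value hz hx
    (f := fun w => ⟪w, e 0⟫) (by fun_prop) ⟨hzs.le, hsx.le⟩
  refine ⟨⟪w, e 1⟫, ?_⟩
  change s • e 0 + ⟪w, e 1⟫ • e 1 ∈ Ω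
  rwa [← hws, inner_smul_add_inner_smul]

lemma chord_eq_empty (h : IsConvexDomain Ω r) {s : ℝ} (hs : suppFn Ω (e 0) ≤ s) :
    chord Ω e s = ∅ := by
  refine eq_empty_iff_forall_notMem.2 fun y hy => ?_
  -- Openness allows a small step in the direction `e 0` beyond the supporting line.
  have hnear : ∀ᶠ c in nhdsWithin (0 : ℝ) (Ioi 0), (s + c) • e 0 + y • e 1 ∈ Ω :=
    nhdsWithin_le_nhds <| ContinuousAt.preimage_mem_nhds
      (f := fun c : ℝ => (s + c) • e 0 + y • e 1) (by fun_prop)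
      (h.isOpen.mem_nhds (by rwa [add_zero]))
  obtain ⟨c, hcΩ, hc : 0 < c⟩ := (hnear.and self_mem_nhdsWithin).exists
  have hle := h.inner_le_suppFn (e 0) hcΩ
  rw [inner_smul_add_smul_fst] at hle
  linarith

lemma frontier_chord_subset (s : ℝ) :
    frontier (chord Ω e s) ⊆ {y | s • e 0 + y • e 1 ∈ frontier Ω} :=
  Continuous.frontier_preimage_subset (f := fun y : ℝ => s • e 0 + y • e 1) (by fun_prop) Ω

lemma volume_real_chord_le_capDiam (h : IsConvexDomain Ω r) {s : ℝ}
    (hne : (chord Ω e s).Nonempty) :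
    volume.real (chord Ω e s) ≤ capDiam Ω (e 0) (suppFn Ω (e 0) - s) := by
  have hb := h.isBounded_chord e s
  have hcap : Bornology.IsBounded
      {x ∈ frontier Ω | suppFn Ω (e 0) - (suppFn Ω (e 0) - s) ≤ ⟪x, e 0⟫} :=
    (h.isBounded.closure.subset frontier_subset_closure).subset (sep_subset _ _)
  have hmem {y : ℝ} (hy : y ∈ frontier (chord Ω e s)) : s • e 0 + y • e 1 ∈
      {x ∈ frontier Ω | suppFn Ω (e 0) - (suppFn Ω (e 0) - s) ≤ ⟪x, e 0⟫} :=
    ⟨frontier_chord_subset e s hy, by rw [inner_smul_add_smul_fst, sub_sub_cancel]⟩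
  calc volume.real (chord Ω e s) = sSup (chord Ω e s) - sInf (chord Ω e s) :=
        volume_real_eq_sSup_sub_sInf (h.convex_chord e s) hb hne
    _ ≤ dist (s • e 0 + sSup (chord Ω e s) • e 1) (s • e 0 + sInf (chord Ω e s) • e 1) := by
        rw [dist_add_left, dist_eq_norm, ← sub_smul, norm_smul, e.norm_eq_one, mul_one]
        exact le_abs_self _
    _ ≤ capDiam Ω (e 0) (suppFn Ω (e 0) - s) :=
        Metric.dist_le_diam_of_mem hcap (hmem (csSup_mem_frontier hne hb.bddAbove))
          (hmem (csInf_mem_frontier hne hb.bddBelow))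

lemma volume_real_chord_le (h : IsConvexDomain Ω r) {K : ℝ} (hK : HasCapDiamBound Ω K)
    (s : ℝ) :
    volume.real (chord Ω e s) ≤ K * √(suppFn Ω (e 0) - s) := by
  rcases (chord Ω e s).eq_empty_or_nonempty with hempty | hne
  · rw [hempty, measureReal_empty]
    exact mul_nonneg hK.nonneg (Real.sqrt_nonneg _)
  · have hs : s < suppFn Ω (e 0) := by
      by_contra! hle
      exact hne.ne_empty (h.chord_eq_empty e hle)
    exact (h.volume_real_chord_le_capDiam e hne).trans (hK _ (e.norm_eq_one 0) _ (sub_pos.2 hs))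

lemma concaveOn_volume_real_chord (h : IsConvexDomain Ω r) :
    ConcaveOn ℝ (Ioo (-suppFn Ω (-e 0)) (suppFn Ω (e 0))) fun s => volume.real (chord Ω e s) := by
  refine ⟨convex_Ioo _ _, fun s hs t ht p q hp hq hpq => ?_⟩
  simp only [smul_eq_mul]
  rw [← volume_real_smul_add_smul (h.convex_chord e s) (h.isBounded_chord e s)
    (h.chord_nonempty e hs) (h.convex_chord e t) (h.isBounded_chord e t)
    (h.chord_nonempty e ht) hp hq]
  exact measureReal_mono (h.smul_chord_add_smul_chord_subset e hp hq hpq s t)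
    (h.isBounded_chord e _).measure_lt_top.ne

lemma isChordProfile (h : IsConvexDomain Ω r) {K : ℝ} (hK : HasCapDiamBound Ω K) :
    IsChordProfile (fun s => volume.real (chord Ω e s)) (-suppFn Ω (-e 0)) (suppFn Ω (e 0)) K where
  lt := by
    have he : e 0 ≠ 0 := e.orthonormal.ne_zero 0
    linarith [h.suppFn_pos he, h.suppFn_pos (neg_ne_zero.2 he)]
  nonneg _ := measureReal_nonneg
  le_left s := by
    have hreflect := h.volume_real_chord_le (e.map (LinearIsometryEquiv.neg ℝ)) hK (-s)
    rw [chord_map_neg, measureReal_def, Measure.measure_neg, sub_neg_eq_add, add_comm] at hreflect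
    rwa [sub_neg_eq_add]
  le_right := h.volume_real_chord_le e hK
  concaveOn := h.concaveOn_volume_real_chord e

end IsConvexDomain

/-! ### Passage to coordinates -/

/-- The point of the Euclidean plane with given coordinates; `ℝ × ℝ` carries the sup norm. -/
def planePt : (ℝ × ℝ) ≃L[ℝ] E2 :=
  (ContinuousLinearEquiv.finTwoArrow ℝ ℝ).symm.trans (EuclideanSpace.equiv (Fin 2) ℝ).symm

lemma planePt_apply (x : ℝ × ℝ) : planePt x = !₂[x.1, x.2] := rfl

lemma inner_planePt (x y : ℝ × ℝ) : ⟪planePt x, planePt y⟫ = x.1 * y.1 + x.2 * y.2 := by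
  simp [planePt_apply, PiLp.inner_apply, Fin.sum_univ_two, mul_comm]

lemma norm_planePt_sq (x : ℝ × ℝ) : ‖planePt x‖ ^ 2 = x.1 ^ 2 + x.2 ^ 2 := by
  rw [← real_inner_self_eq_norm_sq, inner_planePt]
  ring

lemma norm_le_norm_planePt (x : ℝ × ℝ) : ‖x‖ ≤ ‖planePt x‖ := by
  have h := norm_planePt_sq x
  refine norm_prod_le_iff.2 ⟨?_, ?_⟩ <;>
    exact abs_le_of_sq_le_sq (by nlinarith [sq_nonneg x.1, sq_nonneg x.2]) (norm_nonneg _)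

lemma norm_planePt_le (x : ℝ × ℝ) : ‖planePt x‖ ≤ 2 * ‖x‖ := by
  have h1 : x.1 ^ 2 ≤ ‖x‖ ^ 2 := sq_le_sq.2 ((norm_fst_le x).trans (le_abs_self _))
  have h2 : x.2 ^ 2 ≤ ‖x‖ ^ 2 := sq_le_sq.2 ((norm_snd_le x).trans (le_abs_self _))
  refine (sq_le_sq₀ (norm_nonneg _) (by positivity)).1 ?_
  rw [norm_planePt_sq]
  nlinarith

lemma measurePreserving_planePt : MeasurePreserving planePt :=
  (EuclideanSpace.volume_preserving_symm_measurableEquiv_toLp (Fin 2)).symm.comp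
    (volume_preserving_finTwoArrow ℝ).symm

lemma latticePairing_eq_inner (k : ℤ × ℤ) (x : ℝ × ℝ) :
    latticePairing k x = ⟪planePt x, planePt (latticePt k)⟫ := by
  rw [inner_planePt, latticePairing, latticePt]
  ring

lemma latticeCount_smul_eq (Ω : Set E2) (t : ℝ) :
    latticeCount (t • Ω) = dilateCount (planePt ⁻¹' Ω) t := by
  refine Nat.card_congr ((finTwoArrowEquiv ℤ).subtypeEquiv fun k => ?_)
  have hek : ek k = planePt (latticePt (finTwoArrowEquiv ℤ k)) := by
    ext i
    fin_cases i <;> rfl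
  have hpre : planePt ⁻¹' (t • Ω) = t • planePt ⁻¹' Ω := by
    simp only [← ContinuousLinearEquiv.image_symm_eq_preimage, image_smul_set]
  rw [mem_ofPred_eq, mem_ofPred_eq, hek, ← hpre, mem_preimage]

lemma latticeRest_eq {Ω : Set E2} (hΩ : MeasurableSet Ω) (t : ℝ) :
    latticeRest Ω t =
      dilateCount (planePt ⁻¹' Ω) t - t ^ 2 * volume.real (planePt ⁻¹' Ω) := by
  rw [latticeRest, latticeCount_smul_eq, measureReal_def,
    measurePreserving_planePt.measure_preimage hΩ.nullMeasurableSet]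

/-- Coordinates in the frame `e`, as a map from the plane of coordinates. -/
def framePt (e : OrthonormalBasis (Fin 2) ℝ E2) : (ℝ × ℝ) ≃L[ℝ] E2 :=
  planePt.trans e.repr.symm.toContinuousLinearEquiv

lemma framePt_apply (e : OrthonormalBasis (Fin 2) ℝ E2) (z : ℝ × ℝ) :
    framePt e z = z.1 • e 0 + z.2 • e 1 :=
  (e.sum_repr_symm (planePt z)).symm.trans (Fin.sum_univ_two _)

lemma measurePreserving_framePt (e : OrthonormalBasis (Fin 2) ℝ E2) :
    MeasurePreserving (framePt e) :=
  e.measurePreserving_repr_symm.comp measurePreserving_planePt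

lemma setIntegral_comp_fst {F : Type*} [NormedAddCommGroup F] [NormedSpace ℝ F]
    [CompleteSpace F] {S : Set (ℝ × ℝ)}
    (hS : MeasurableSet S) {g : ℝ → F} (hg : IntegrableOn (fun z => g z.1) S) :
    ∫ z in S, g z.1 = ∫ s, volume.real (Prod.mk s ⁻¹' S) • g s := by
  rw [← integral_indicator hS, Measure.volume_eq_prod,
    integral_prod _ ((integrable_indicator_iff hS).2 hg)]
  refine integral_congr_ae (Filter.Eventually.of_forall fun s => ?_)
  change ∫ y, (Prod.mk s ⁻¹' S).indicator (fun _ => g s) y = volume.real (Prod.mk s ⁻¹' S) • g s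
  rw [integral_indicator (measurable_prodMk_left hS), setIntegral_const]

lemma indicatorFourier_preimage_planePt (Ω : Set E2) (k : ℤ × ℤ) (t : ℝ) :
    indicatorFourier (planePt ⁻¹' Ω) k t =
      ∫ x in Ω, (𝐞 (-(t * ⟪x, planePt (latticePt k)⟫)) : ℂ) := by
  simp_rw [indicatorFourier, latticePairing_eq_inner]
  exact measurePreserving_planePt.setIntegral_preimage_emb
    planePt.toHomeomorph.measurableEmbedding
    (fun x => (𝐞 (-(t * ⟪x, planePt (latticePt k)⟫)) : ℂ)) Ω

namespace IsConvexDomain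

variable {Ω : Set E2} {r : ℝ}

lemma preimage_planePt (h : IsConvexDomain Ω r) : IsConvexDomain (planePt ⁻¹' Ω) (r / 2) where
  convex := h.convex.is_linear_preimage planePt.toLinearMap.isLinear
  isOpen := h.isOpen.preimage planePt.continuous
  isBounded := by
    obtain ⟨B, hB⟩ := h.isBounded.exists_norm_le
    exact isBounded_iff_forall_norm_le.2 ⟨B, fun x hx => (norm_le_norm_planePt x).trans (hB _ hx)⟩
  r_pos := half_pos h.r_pos
  ball_subset x hx := h.ball_subset (by
    rw [mem_ball_zero_iff] at hx ⊢
    linarith [norm_planePt_le x])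

lemma exists_isLipschitzGauge_suppFn (h : IsConvexDomain Ω r) :
    ∃ B, IsLipschitzGauge (fun x => suppFn Ω (planePt x)) r B := by
  obtain ⟨B, hB0, hB⟩ := h.isBounded.exists_pos_norm_le
  have hle (x y : ℝ × ℝ) :
      suppFn Ω (planePt x) ≤ suppFn Ω (planePt y) + B * 2 * ‖x - y‖ := by
    refine h.suppFn_le fun z hz => ?_
    calc ⟪z, planePt x⟫ = ⟪z, planePt y⟫ + ⟪z, planePt (x - y)⟫ := by
          rw [map_sub, inner_sub_right, add_sub_cancel]
      _ ≤ suppFn Ω (planePt y) + ‖z‖ * ‖planePt (x - y)‖ :=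
          add_le_add (h.inner_le_suppFn _ hz) (real_inner_le_norm _ _)
      _ ≤ suppFn Ω (planePt y) + B * (2 * ‖x - y‖) := by
          gcongr
          exacts [hB z hz, norm_planePt_le _]
      _ = suppFn Ω (planePt y) + B * 2 * ‖x - y‖ := by ring
  exact ⟨B * 2, {
    r_pos := h.r_pos
    map_smul := fun c hc x => by rw [map_smul, suppFn_smul Ω hc.le]
    abs_sub_le := fun x y => abs_sub_le_iff.2
      ⟨sub_le_iff_le_add'.2 (hle x y),
        sub_le_iff_le_add'.2 (by simpa only [norm_sub_rev y x] using hle y x)⟩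
    mul_norm_le := fun x => (mul_le_mul_of_nonneg_left (norm_le_norm_planePt x) h.r_pos.le).trans
      (h.mul_norm_le_suppFn _) }⟩

/-- Fubini along the direction of `k`. -/
lemma indicatorFourier_eq_fourier (h : IsConvexDomain Ω r) (e : OrthonormalBasis (Fin 2) ℝ E2)
    {N : ℝ} {k : ℤ × ℤ} (hk : planePt (latticePt k) = N • e 0) (t : ℝ) :
    indicatorFourier (planePt ⁻¹' Ω) k t =
      𝓕 (fun s => ((volume.real (chord Ω e s) : ℝ) : ℂ)) (t * N) := by
  have hopen : IsOpen (framePt e ⁻¹' Ω) := h.isOpen.preimage (framePt e).continuous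
  have hfin : volume (framePt e ⁻¹' Ω) ≠ ⊤ := by
    rw [(measurePreserving_framePt e).measure_preimage h.isOpen.measurableSet.nullMeasurableSet]
    exact h.isBounded.measure_lt_top.ne
  have hphase (z : ℝ × ℝ) : t * ⟪framePt e z, planePt (latticePt k)⟫ = z.1 * (t * N) := by
    rw [hk, framePt_apply, inner_smul_right, inner_smul_add_smul_fst]
    ring
  have hchord (s : ℝ) : Prod.mk s ⁻¹' (framePt e ⁻¹' Ω) = chord Ω e s := by
    ext y
    rw [mem_preimage, mem_preimage, framePt_apply, chord, mem_ofPred_eq]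
  have hint : IntegrableOn (fun z : ℝ × ℝ => (𝐞 (-(z.1 * (t * N))) : ℂ)) (framePt e ⁻¹' Ω) :=
    Measure.integrableOn_of_bounded (M := 1) hfin
      (Continuous.aestronglyMeasurable (continuous_subtype_val.comp
        (Real.continuous_fourierChar.comp (by fun_prop))))
      (Filter.Eventually.of_forall fun z => (Circle.norm_coe _).le)
  rw [indicatorFourier_preimage_planePt,
    ← (measurePreserving_framePt e).setIntegral_preimage_emb
      (framePt e).toHomeomorph.measurableEmbedding]
  simp_rw [hphase]
  rw [setIntegral_comp_fst hopen.measurableSet (g := fun s => (𝐞 (-(s * (t * N))) : ℂ)) hint,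
    Real.fourier_real_eq]
  simp_rw [hchord, Circle.smul_def, Complex.real_smul, smul_eq_mul, mul_comm]

end IsConvexDomain

/-! ### Wave packet decomposition of a single frequency -/

namespace IsChordProfile

variable {f : ℝ → ℝ} {α β K η d N : ℝ}

lemma secondDiff_eq_zero_of_ge (h : IsChordProfile f α β K) (hη : 0 ≤ η) {s : ℝ}
    (hs : β + η ≤ s) : secondDiff f η s = 0 := by
  simp only [secondDiff, h.eq_zero_of_ge (show β ≤ s by linarith),
    h.eq_zero_of_ge (show β ≤ s - η by linarith), h.eq_zero_of_ge (show β ≤ s + η by linarith)]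
  norm_num

lemma secondDiff_eq_zero_of_le (h : IsChordProfile f α β K) (hη : 0 ≤ η) {s : ℝ}
    (hs : s ≤ α - η) : secondDiff f η s = 0 := by
  rw [← neg_neg s, ← secondDiff_comp_neg]
  exact h.comp_neg.secondDiff_eq_zero_of_ge hη (by linarith)

lemma support_indicator_Ioi_secondDiff_subset (h : IsChordProfile f α β K) (hη : 0 ≤ η)
    (hd : η ≤ d) :
    Function.support ((Ioi (β - d)).indicator fun s => (secondDiff f η s : ℂ)) ⊆
      Metric.closedBall β d := fun s hs => by
  obtain ⟨hs₁ : β - d < s, hs₂⟩ := indicator_apply_ne_zero.1 hs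
  have hsβ : s < β + η := by
    by_contra! hle
    exact hs₂ (Complex.ofReal_eq_zero.2 (h.secondDiff_eq_zero_of_ge hη hle))
  rw [Metric.mem_closedBall, Real.dist_eq, abs_le]
  constructor <;> linarith

lemma support_indicator_Iio_secondDiff_subset (h : IsChordProfile f α β K) (hη : 0 ≤ η)
    (hd : η ≤ d) :
    Function.support ((Iio (α + d)).indicator fun s => (secondDiff f η s : ℂ)) ⊆
      Metric.closedBall α d := fun s hs => by
  obtain ⟨hs₁ : s < α + d, hs₂⟩ := indicator_apply_ne_zero.1 hs
  have hsα : α - η < s := by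
    by_contra! hle
    exact hs₂ (Complex.ofReal_eq_zero.2 (h.secondDiff_eq_zero_of_le hη hle))
  rw [Metric.mem_closedBall, Real.dist_eq, abs_le]
  constructor <;> linarith

lemma isWavePacket_right (h : IsChordProfile f α β K) (hN : 0 < N) (hη : 0 < η) (hd : 2 * η ≤ d)
    (hd_le : 2 * d ≤ β - α) :
    IsWavePacket
      (fun t => 𝓕 ((Ioi (β - d)).indicator fun s => (secondDiff f η s : ℂ)) (N * t))
      (N * β) (12 * K * (η * √η)) (N * d) := by
  refine (IsWavePacket.of_fourier_comp_mul hN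
    ((integrable_secondDiff h.integrable η).ofReal.indicator measurableSet_Ioi)
    (h.support_indicator_Ioi_secondDiff_subset hη.le (by linarith))).mono ?_
  simp_rw [norm_indicator_eq_indicator_norm, Complex.norm_real, Real.norm_eq_abs]
  rw [integral_indicator measurableSet_Ioi]
  exact h.setIntegral_abs_secondDiff_right_le hη hd hd_le

lemma isWavePacket_left (h : IsChordProfile f α β K) (hN : 0 < N) (hη : 0 < η) (hd : 2 * η ≤ d)
    (hd_le : 2 * d ≤ β - α) :
    IsWavePacket
      (fun t => 𝓕 ((Iio (α + d)).indicator fun s => (secondDiff f η s : ℂ)) (N * t))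
      (N * α) (12 * K * (η * √η)) (N * d) := by
  refine (IsWavePacket.of_fourier_comp_mul hN
    ((integrable_secondDiff h.integrable η).ofReal.indicator measurableSet_Iio)
    (h.support_indicator_Iio_secondDiff_subset hη.le (by linarith))).mono ?_
  simp_rw [norm_indicator_eq_indicator_norm, Complex.norm_real, Real.norm_eq_abs]
  rw [integral_indicator measurableSet_Iio]
  exact h.setIntegral_abs_secondDiff_left_le hη hd hd_le

lemma norm_fourier_secondDiff_sub_sub_le (h : IsChordProfile f α β K) (hη : 0 < η)
    (hd : 2 * η ≤ d) (hd_le : 2 * d ≤ β - α) (w : ℝ) :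
    ‖𝓕 (fun s => (secondDiff f η s : ℂ)) w
      - 𝓕 ((Ioi (β - d)).indicator fun s => (secondDiff f η s : ℂ)) w
      - 𝓕 ((Iio (α + d)).indicator fun s => (secondDiff f η s : ℂ)) w‖ ≤
      4 * K * η ^ 2 / √d := by
  obtain ⟨q, hq⟩ : ∃ q : ℝ → ℂ, q = fun s => (secondDiff f η s : ℂ) := ⟨_, rfl⟩
  have hqi : Integrable q := hq ▸ (integrable_secondDiff h.integrable η).ofReal
  have hsplit : (fun s => q s - (Ioi (β - d)).indicator q s - (Iio (α + d)).indicator q s) =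
      (Icc (α + d) (β - d)).indicator q := by
    funext s
    simp only [indicator_apply, mem_Ioi, mem_Iio, mem_Icc]
    grind
  rw [← hq, ← fourier_fun_sub hqi (hqi.indicator measurableSet_Ioi),
    ← fourier_fun_sub (f := fun s => q s - (Ioi (β - d)).indicator q s)
      (hqi.sub (hqi.indicator measurableSet_Ioi))
      (hqi.indicator measurableSet_Iio), hsplit]
  refine (norm_fourier_le _ _).trans ?_
  simp_rw [norm_indicator_eq_indicator_norm, hq, Complex.norm_real, Real.norm_eq_abs]
  rw [integral_indicator measurableSet_Icc]
  exact h.setIntegral_abs_secondDiff_mid_le hη hd hd_le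

/-- The factor `4 sin² (π η N t)` replaces `f` by its second difference, which is small away from
the endpoints of the support; only the neighbourhoods of the endpoints contribute packets. -/
lemma exists_isWavePacket (h : IsChordProfile f α β K) (hN : 0 < N) (hη : 0 < η)
    (hd : 2 * η ≤ d) (hd_le : 2 * d ≤ β - α) :
    ∃ U V : ℝ → ℂ, IsWavePacket U (N * β) (12 * K * (η * √η)) (N * d) ∧
      IsWavePacket V (N * α) (12 * K * (η * √η)) (N * d) ∧
      ∀ t, ‖((4 * Real.sin (Real.pi * (η * (N * t))) ^ 2 : ℝ) : ℂ)
        * 𝓕 (fun s => (f s : ℂ)) (N * t) - U t - V t‖ ≤ 4 * K * η ^ 2 / √d :=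
  ⟨_, _, h.isWavePacket_right hN hη hd hd_le, h.isWavePacket_left hN hη hd hd_le, fun t => by
    rw [← fourier_secondDiff h.integrable]
    exact h.norm_fourier_secondDiff_sub_sub_le hη hd hd_le _⟩

end IsChordProfile

lemma supNatAbs_le_norm_planePt_latticePt (k : ℤ × ℤ) :
    (supNatAbs k : ℝ) ≤ ‖planePt (latticePt k)‖ :=
  (norm_latticePt k).symm.trans_le (norm_le_norm_planePt _)

lemma div_mul_sqrt_div_le {ε ν N : ℝ} (hε : 0 ≤ ε) (hν : 0 < ν) (hνN : ν ≤ N) :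
    ε / N * √(ε / N) ≤ ε * √ε * (ν * √ν)⁻¹ :=
  calc ε / N * √(ε / N) ≤ ε / ν * √(ε / ν) := by gcongr
    _ = ε * √ε * (ν * √ν)⁻¹ := by
      rw [Real.sqrt_div hε]
      field_simp

lemma div_sq_div_sqrt_div_le {ε ν N r : ℝ} (hr : 0 < r) (hν : 0 < ν) (hνN : ν ≤ N) :
    (ε / N) ^ 2 / √(r / N) ≤ ε ^ 2 / √r * (ν * √ν)⁻¹ := by
  have hN : 0 < N := hν.trans_le hνN
  calc (ε / N) ^ 2 / √(r / N) = ε ^ 2 / √r * (N * √N)⁻¹ := by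
        rw [Real.sqrt_div hr.le]
        field_simp
        rw [Real.sq_sqrt hN.le]
    _ ≤ ε ^ 2 / √r * (ν * √ν)⁻¹ := by gcongr

namespace IsConvexDomain

variable {Ω : Set E2} {r K ε : ℝ}

lemma exists_isWavePacket_of_eq_smul (h : IsConvexDomain Ω r) (hK : HasCapDiamBound Ω K)
    (hε : 0 < ε) (hεr : 2 * ε ≤ r) {N : ℝ} (hN : 1 ≤ N) (e : OrthonormalBasis (Fin 2) ℝ E2)
    {k : ℤ × ℤ} (hk : planePt (latticePt k) = N • e 0) :
    ∃ U V : ℝ → ℂ,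
      IsWavePacket U (suppFn Ω (planePt (latticePt k))) (12 * K * (ε / N * √(ε / N))) r ∧
      IsWavePacket V (-suppFn Ω (planePt (-latticePt k))) (12 * K * (ε / N * √(ε / N))) r ∧
      ∀ t, ‖((4 * Real.sin (Real.pi * (ε * t)) ^ 2 : ℝ) : ℂ)
        * indicatorFourier (planePt ⁻¹' Ω) k t - U t - V t‖ ≤
          4 * K * (ε / N) ^ 2 / √(r / N) := by
  have hr := h.r_pos
  have hN0 : 0 < N := by linarith
  have hright : r ≤ suppFn Ω (e 0) := by simpa using h.mul_norm_le_suppFn (e 0)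
  have hleft : r ≤ suppFn Ω (-e 0) := by simpa using h.mul_norm_le_suppFn (-e 0)
  have hrN : r / N ≤ r := div_le_self hr.le hN
  obtain ⟨U, V, hU, hV, hUV⟩ := (h.isChordProfile (e := e) hK).exists_isWavePacket hN0
    (η := ε / N) (d := r / N) (by positivity) (by rw [← mul_div_assoc]; gcongr) (by linarith)
  rw [mul_div_cancel₀ r hN0.ne'] at hU hV
  rw [map_neg, hk, ← smul_neg, suppFn_smul Ω hN0.le, suppFn_smul Ω hN0.le, ← mul_neg]
  refine ⟨U, V, hU, hV, fun t => ?_⟩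
  rw [h.indicatorFourier_eq_fourier e hk, mul_comm t N]
  convert hUV t using 7
  field_simp

lemma exists_isWavePacket (h : IsConvexDomain Ω r) (hK : HasCapDiamBound Ω K) (hε : 0 < ε)
    (hεr : 2 * ε ≤ r) {k : ℤ × ℤ} (hk : k ≠ 0) :
    ∃ U V : ℝ → ℂ,
      IsWavePacket U (suppFn Ω (planePt (latticePt k)))
        (12 * K * (ε * √ε) * ((supNatAbs k : ℝ) * √(supNatAbs k))⁻¹) r ∧
      IsWavePacket V (-suppFn Ω (planePt (-latticePt k)))
        (12 * K * (ε * √ε) * ((supNatAbs k : ℝ) * √(supNatAbs k))⁻¹) r ∧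
      ∀ t, ‖((4 * Real.sin (Real.pi * (ε * t)) ^ 2 : ℝ) : ℂ)
        * indicatorFourier (planePt ⁻¹' Ω) k t - U t - V t‖ ≤
          4 * K * (ε ^ 2 / √r) * ((supNatAbs k : ℝ) * √(supNatAbs k))⁻¹ := by
  have hK0 := hK.nonneg
  obtain ⟨N, hN⟩ : ∃ N, N = ‖planePt (latticePt k)‖ := ⟨_, rfl⟩
  have hν : 1 ≤ (supNatAbs k : ℝ) := by exact_mod_cast supNatAbs_pos hk
  have hνN : (supNatAbs k : ℝ) ≤ N := hN ▸ supNatAbs_le_norm_planePt_latticePt k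
  have hN0 : 0 < N := by linarith
  obtain ⟨e, he⟩ := exists_orthonormalBasis_fst_eq
    (norm_smul_inv_norm (𝕜 := ℝ) (norm_pos_iff.1 (hN0.trans_eq hN)))
  have hke : planePt (latticePt k) = N • e 0 := by
    rw [he, ← hN, RCLike.ofReal_real_eq_id, id, smul_inv_smul₀ hN0.ne']
  obtain ⟨U, V, hU, hV, hUV⟩ :=
    h.exists_isWavePacket_of_eq_smul hK hε hεr (hν.trans hνN) e hke
  have hmass : 12 * K * (ε / N * √(ε / N)) ≤
      12 * K * (ε * √ε) * ((supNatAbs k : ℝ) * √(supNatAbs k))⁻¹ := by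
    rw [mul_assoc _ (ε * √ε)]
    exact mul_le_mul_of_nonneg_left (div_mul_sqrt_div_le hε.le (by linarith) hνN) (by positivity)
  have herr : 4 * K * (ε / N) ^ 2 / √(r / N) ≤
      4 * K * (ε ^ 2 / √r) * ((supNatAbs k : ℝ) * √(supNatAbs k))⁻¹ := by
    rw [mul_div_assoc, mul_assoc _ (ε ^ 2 / √r)]
    exact mul_le_mul_of_nonneg_left (div_sq_div_sqrt_div_le h.r_pos (by linarith) hνN)
      (by positivity)
  exact ⟨U, V, hU.mono hmass, hV.mono hmass, fun t => (hUV t).trans herr⟩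

end IsConvexDomain

/-! ### The mean square of the smoothed sums -/

lemma sq_mul_le_of_le_one {ν p c m A : ℝ} (hν : 0 < ν) (hp : 0 ≤ p) (hpc : p ≤ c) (hc : c ≤ 1)
    (hA : 0 ≤ A) :
    (p * (m * (ν * √ν)⁻¹)) ^ 2 * (A * ν) ≤ A * m ^ 2 * ((ν ^ 2)⁻¹ * c) :=
  calc (p * (m * (ν * √ν)⁻¹)) ^ 2 * (A * ν) = A * m ^ 2 * ((ν ^ 2)⁻¹ * p ^ 2) := by
        rw [mul_pow, mul_pow, inv_pow, mul_pow, Real.sq_sqrt hν.le]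
        field_simp
    _ ≤ A * m ^ 2 * ((ν ^ 2)⁻¹ * c) := by
        have : p ^ 2 ≤ c := by nlinarith
        gcongr

namespace IsLipschitzGauge

variable {ρ : ℝ × ℝ → ℝ} {r B : ℝ}

lemma map_zero (h : IsLipschitzGauge ρ r B) : ρ 0 = 0 := by
  have h₂ := h.map_smul 2 two_pos 0
  rw [smul_zero] at h₂
  linarith

lemma nonneg (h : IsLipschitzGauge ρ r B) (x : ℝ × ℝ) : 0 ≤ ρ x :=
  (mul_nonneg h.r_pos.le (norm_nonneg x)).trans (h.mul_norm_le x)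

lemma map_latticePt_add_one_le (h : IsLipschitzGauge ρ r B) {k : ℤ × ℤ} (hk : k ≠ 0) :
    ρ (latticePt k) + 1 ≤ (B + 1) * supNatAbs k := by
  have hν : (1 : ℝ) ≤ supNatAbs k := by exact_mod_cast supNatAbs_pos hk
  have hle := (abs_le.1 (h.abs_sub_le (latticePt k) 0)).2
  rw [h.map_zero, sub_zero, sub_zero, norm_latticePt] at hle
  linarith

lemma exists_intervalIntegral_norm_sum_sq_le (h : IsLipschitzGauge ρ r B) (w : ℝ) :
    ∃ C, 0 ≤ C ∧ ∀ (σ : ℝ) (S : Finset (ℤ × ℤ)) (U : ℤ × ℤ → ℝ → ℂ) (p : ℤ × ℤ → ℝ) (m M : ℝ),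
      |σ| = 1 → 1 ≤ M → 0 ∉ S → (∀ k ∈ S, 0 ≤ p k) → (∀ k ∈ S, p k ≤ cutoff M (supNatAbs k)) →
      (∀ k ∈ S, IsWavePacket (U k) (σ * ρ (latticePt k))
        (m * ((supNatAbs k : ℝ) * √(supNatAbs k))⁻¹) w) →
      ∀ a, ∫ t in a..(a + 1), ‖∑ k ∈ S, (p k : ℂ) * U k t‖ ^ 2 ≤
        C * (m ^ 2 * (3 + Real.log M)) := by
  obtain ⟨C, hC, hrow⟩ := h.exists_sum_inv_le
  have hB := h.B_nonneg
  refine ⟨Real.exp Real.pi * (8 * (1 + 2 * w) ^ 4) * (C * (B + 1) * 8), by positivity, ?_⟩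
  intro σ S U p m M hσ hM hS hp hpM hU a
  have hpU : ∀ k ∈ S, IsWavePacket (fun t => (p k : ℂ) * U k t) (σ * ρ (latticePt k))
      (p k * (m * ((supNatAbs k : ℝ) * √(supNatAbs k))⁻¹)) w := fun k hk => by
    simpa only [Complex.norm_real, Real.norm_of_nonneg (hp k hk)] using
      (hU k hk).const_mul (p k : ℂ)
  have hA : ∀ k ∈ S, ∑ l ∈ S, ((1 + |σ * ρ (latticePt k) - σ * ρ (latticePt l)|) ^ 4)⁻¹ ≤
      C * (B + 1) * supNatAbs k := fun k hk => by
    simp_rw [← mul_sub, abs_mul, hσ, one_mul]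
    refine (hrow S _ (h.nonneg _)).trans ?_
    rw [mul_assoc]
    exact mul_le_mul_of_nonneg_left
      (h.map_latticePt_add_one_le (ne_of_mem_of_not_mem hk hS)) hC
  calc _ ≤ Real.exp Real.pi * (8 * (1 + 2 * w) ^ 4) *
        ∑ k ∈ S, (p k * (m * ((supNatAbs k : ℝ) * √(supNatAbs k))⁻¹)) ^ 2 *
          (C * (B + 1) * supNatAbs k) := IsWavePacket.intervalIntegral_norm_sum_sq_le hpU hA a
    _ ≤ Real.exp Real.pi * (8 * (1 + 2 * w) ^ 4) *
        ∑ k ∈ S, C * (B + 1) * m ^ 2 *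
          (((supNatAbs k : ℝ) ^ 2)⁻¹ * cutoff M (supNatAbs k)) := by
      refine mul_le_mul_of_nonneg_left (Finset.sum_le_sum fun k hk => ?_) (by positivity)
      have hν : 0 < supNatAbs k := supNatAbs_pos (ne_of_mem_of_not_mem hk hS)
      exact sq_mul_le_of_le_one (by exact_mod_cast hν) (hp k hk) (hpM k hk)
        (cutoff_le_one _ _) (by positivity)
    _ ≤ Real.exp Real.pi * (8 * (1 + 2 * w) ^ 4) *
        (C * (B + 1) * m ^ 2 * (8 * (3 + Real.log M))) := by
      rw [← Finset.mul_sum]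
      exact mul_le_mul_of_nonneg_left (mul_le_mul_of_nonneg_left
        (sum_inv_sq_mul_cutoff_le hM hS) (by positivity)) (by positivity)
    _ = _ := by ring

end IsLipschitzGauge

lemma sixteen_mul_sq_le_four_mul_sin_sq {x : ℝ} (hx : 0 ≤ x) (hx2 : x ≤ 1 / 2) :
    16 * x ^ 2 ≤ 4 * Real.sin (Real.pi * x) ^ 2 := by
  have hsin : 2 * x ≤ Real.sin (Real.pi * x) := by
    have := Real.mul_le_sin (x := Real.pi * x) (by positivity) (by nlinarith [Real.pi_pos])
    rwa [← mul_assoc, div_mul_cancel₀ _ Real.pi_ne_zero] at this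
  nlinarith

lemma mul_norm_sum_le {ι : Type*} {S : Finset ι} {p E : ι → ℝ} {G U V : ι → ℂ} {s : ℝ}
    (hs : 0 ≤ s) (hp : ∀ k, 0 ≤ p k) (hUV : ∀ k ∈ S, ‖(s : ℂ) * G k - U k - V k‖ ≤ E k) :
    s * ‖∑ k ∈ S, (p k : ℂ) * G k‖ ≤
      ‖∑ k ∈ S, (p k : ℂ) * U k‖ + ‖∑ k ∈ S, (p k : ℂ) * V k‖ + ∑ k ∈ S, p k * E k := by
  have hsplit : (s : ℂ) * ∑ k ∈ S, (p k : ℂ) * G k = ∑ k ∈ S, (p k : ℂ) * U k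
      + ∑ k ∈ S, (p k : ℂ) * V k + ∑ k ∈ S, (p k : ℂ) * (s * G k - U k - V k) := by
    rw [Finset.mul_sum, ← Finset.sum_add_distrib, ← Finset.sum_add_distrib]
    exact Finset.sum_congr rfl fun k _ => by ring
  rw [← Real.norm_of_nonneg hs, ← Complex.norm_real, ← norm_mul, hsplit]
  refine norm_add₃_le.trans (add_le_add le_rfl ((norm_sum_le _ _).trans
    (Finset.sum_le_sum fun k hk => ?_)))
  rw [norm_mul, Complex.norm_real, Real.norm_of_nonneg (hp k)]
  exact mul_le_mul_of_nonneg_left (hUV k hk) (hp k)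

/-- The multiplier `4 sin² (π ε t)` is at least `16 ε² t²`, which absorbs the factor `t²` of the
smoothed sum. -/
lemma norm_smoothedSum_le {D : Set (ℝ × ℝ)} {ε t : ℝ} {S : Finset (ℤ × ℤ)} {U V : ℤ × ℤ → ℂ}
    {E : ℤ × ℤ → ℝ} (hε : 0 < ε) (ht : 0 ≤ t) (hεt : ε * t ≤ 1 / 2)
    (hUV : ∀ k ∈ S, ‖((4 * Real.sin (Real.pi * (ε * t)) ^ 2 : ℝ) : ℂ)
      * indicatorFourier D k t - U k - V k‖ ≤ E k) :
    ‖smoothedSum D ε S t‖ ≤ (16 * ε ^ 2)⁻¹ * (‖∑ k ∈ S, (smoothingCoeff ε k : ℂ) * U k‖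
      + ‖∑ k ∈ S, (smoothingCoeff ε k : ℂ) * V k‖ + ∑ k ∈ S, smoothingCoeff ε k * E k) := by
  obtain ⟨G, hG⟩ : ∃ G, G = ∑ k ∈ S, (smoothingCoeff ε k : ℂ) * indicatorFourier D k t := ⟨_, rfl⟩
  have hsum : smoothedSum D ε S t = ((t ^ 2 : ℝ) : ℂ) * G := by
    simp only [smoothedSum, hG, Finset.mul_sum, mul_left_comm]
  rw [hsum, norm_mul, Complex.norm_real, Real.norm_of_nonneg (sq_nonneg t),
    le_inv_mul_iff₀ (by positivity)]
  calc 16 * ε ^ 2 * (t ^ 2 * ‖G‖) = 16 * (ε * t) ^ 2 * ‖G‖ := by ring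
    _ ≤ 4 * Real.sin (Real.pi * (ε * t)) ^ 2 * ‖G‖ := by
      exact mul_le_mul_of_nonneg_right
        (sixteen_mul_sq_le_four_mul_sin_sq (by positivity) hεt) (norm_nonneg G)
    _ ≤ _ := hG ▸ mul_norm_sum_le (by positivity) (smoothingCoeff_nonneg ε) hUV

lemma sum_smoothingCoeff_mul_le {ε c : ℝ} (hε : 0 < ε) (hε1 : ε ≤ 1) (hc : 0 ≤ c)
    {S : Finset (ℤ × ℤ)} (hS : 0 ∉ S) :
    ∑ k ∈ S, smoothingCoeff ε k * (c * ((supNatAbs k : ℝ) * √(supNatAbs k))⁻¹) ≤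
      c * (32 * √(1 / ε)) :=
  calc _ ≤ ∑ k ∈ S, c * (((supNatAbs k : ℝ) * √(supNatAbs k))⁻¹ *
        cutoff (1 / ε) (supNatAbs k)) := by
        refine Finset.sum_le_sum fun k hk => ?_
        rw [mul_comm, mul_assoc]
        gcongr
        exact smoothingCoeff_le_cutoff hε (ne_of_mem_of_not_mem hk hS)
    _ ≤ c * (32 * √(1 / ε)) := by
        rw [← Finset.mul_sum]
        gcongr
        exact sum_inv_mul_sqrt_mul_cutoff_le ((one_le_div hε).2 hε1) hS

lemma sq_add_add_le (x y z : ℝ) : (x + y + z) ^ 2 ≤ 3 * (x ^ 2 + y ^ 2 + z ^ 2) := by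
  nlinarith [sq_nonneg (x - y), sq_nonneg (x - z), sq_nonneg (y - z)]

lemma norm_smoothedSum_sq_le {D : Set (ℝ × ℝ)} {ε c t : ℝ} (hε : 0 < ε) (hε1 : ε ≤ 1)
    (hc : 0 ≤ c) (ht : 0 ≤ t) (hεt : ε * t ≤ 1 / 2) {S : Finset (ℤ × ℤ)} (hS : 0 ∉ S)
    {U V : ℤ × ℤ → ℂ}
    (hUV : ∀ k ∈ S, ‖((4 * Real.sin (Real.pi * (ε * t)) ^ 2 : ℝ) : ℂ)
      * indicatorFourier D k t - U k - V k‖ ≤ c * ((supNatAbs k : ℝ) * √(supNatAbs k))⁻¹) :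
    ‖smoothedSum D ε S t‖ ^ 2 ≤ 3 / (16 * ε ^ 2) ^ 2 *
      (‖∑ k ∈ S, (smoothingCoeff ε k : ℂ) * U k‖ ^ 2
        + ‖∑ k ∈ S, (smoothingCoeff ε k : ℂ) * V k‖ ^ 2 + (32 * c) ^ 2 / ε) := by
  have hle := (norm_smoothedSum_le hε ht hεt hUV).trans (mul_le_mul_of_nonneg_left
    (add_le_add le_rfl (sum_smoothingCoeff_mul_le hε hε1 hc hS)) (by positivity))
  obtain ⟨u, hu⟩ : ∃ u, u = ‖∑ k ∈ S, (smoothingCoeff ε k : ℂ) * U k‖ := ⟨_, rfl⟩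
  obtain ⟨v, hv⟩ : ∃ v, v = ‖∑ k ∈ S, (smoothingCoeff ε k : ℂ) * V k‖ := ⟨_, rfl⟩
  rw [← hu, ← hv] at hle ⊢
  calc _ ≤ ((16 * ε ^ 2)⁻¹ * (u + v + c * (32 * √(1 / ε)))) ^ 2 :=
        pow_le_pow_left₀ (norm_nonneg _) hle 2
    _ = ((16 * ε ^ 2)⁻¹) ^ 2 * (u + v + c * (32 * √(1 / ε))) ^ 2 := mul_pow _ _ _
    _ ≤ ((16 * ε ^ 2)⁻¹) ^ 2 * (3 * (u ^ 2 + v ^ 2 + (c * (32 * √(1 / ε))) ^ 2)) :=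
        mul_le_mul_of_nonneg_left (sq_add_add_le _ _ _) (by positivity)
    _ = 3 / (16 * ε ^ 2) ^ 2 * (u ^ 2 + v ^ 2 + (32 * c) ^ 2 / ε) := by
        simp only [mul_pow, Real.sq_sqrt (one_div_pos.2 hε).le]
        field_simp

lemma intervalIntegral_le_mul_add {f g G : ℝ → ℝ} {a b c d : ℝ} (hab : a ≤ b)
    (hf : Continuous f) (hg : Continuous g) (hG : ∀ t, 0 ≤ G t)
    (hle : ∀ t ∈ Ioc a b, G t ≤ c * (f t + g t + d)) :
    ∫ t in a..b, G t ≤ c * ((∫ t in a..b, f t) + (∫ t in a..b, g t) + (b - a) * d) := by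
  have hfi := hf.intervalIntegrable (μ := volume) a b
  have hgi := hg.intervalIntegrable (μ := volume) a b
  calc ∫ t in a..b, G t ≤ ∫ t in a..b, c * (f t + g t + d) := by
        rw [intervalIntegral.integral_of_le hab, intervalIntegral.integral_of_le hab]
        exact integral_mono_of_nonneg (.of_forall hG)
          (((hfi.add hgi).add intervalIntegrable_const).const_mul c).1
          ((ae_restrict_iff' measurableSet_Ioc).2 (.of_forall hle))
    _ = _ := by
        rw [intervalIntegral.integral_const_mul,
          intervalIntegral.integral_add (hfi.add hgi) intervalIntegrable_const,
          intervalIntegral.integral_add hfi hgi, intervalIntegral.integral_const, smul_eq_mul]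

lemma intervalIntegral_norm_smoothedSum_sq_le {D : Set (ℝ × ℝ)} {ε c a w : ℝ} (hε : 0 < ε)
    (hε1 : ε ≤ 1) (hc : 0 ≤ c) (ha : 0 ≤ a) (hεa : ε * (a + 1) ≤ 1 / 2) {S : Finset (ℤ × ℤ)}
    (hS : 0 ∉ S) {U V : ℤ × ℤ → ℝ → ℂ} {τ τ' M M' : ℤ × ℤ → ℝ}
    (hU : ∀ k ∈ S, IsWavePacket (U k) (τ k) (M k) w)
    (hV : ∀ k ∈ S, IsWavePacket (V k) (τ' k) (M' k) w)
    (hUV : ∀ k ∈ S, ∀ t, ‖((4 * Real.sin (Real.pi * (ε * t)) ^ 2 : ℝ) : ℂ)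
      * indicatorFourier D k t - U k t - V k t‖ ≤
        c * ((supNatAbs k : ℝ) * √(supNatAbs k))⁻¹) :
    ∫ t in a..(a + 1), ‖smoothedSum D ε S t‖ ^ 2 ≤ 3 / (16 * ε ^ 2) ^ 2 *
      ((∫ t in a..(a + 1), ‖∑ k ∈ S, (smoothingCoeff ε k : ℂ) * U k t‖ ^ 2)
        + (∫ t in a..(a + 1), ‖∑ k ∈ S, (smoothingCoeff ε k : ℂ) * V k t‖ ^ 2)
        + (32 * c) ^ 2 / ε) := by
  have hcont : ∀ {W : ℤ × ℤ → ℝ → ℂ} {τ M : ℤ × ℤ → ℝ},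
      (∀ k ∈ S, IsWavePacket (W k) (τ k) (M k) w) →
      Continuous fun t => ‖∑ k ∈ S, (smoothingCoeff ε k : ℂ) * W k t‖ ^ 2 := fun hW =>
    (continuous_finsetSum _ fun k hk => continuous_const.mul (hW k hk).continuous).norm.pow 2
  have hle := intervalIntegral_le_mul_add (by linarith) (hcont hU) (hcont hV)
    (G := fun t => ‖smoothedSum D ε S t‖ ^ 2) (fun t => sq_nonneg _) fun t ht =>
      norm_smoothedSum_sq_le hε hε1 hc (ha.trans ht.1.le)
        ((mul_le_mul_of_nonneg_left ht.2 hε.le).trans hεa) hS fun k hk => hUV k hk t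
  rwa [add_sub_cancel_left, one_mul] at hle

namespace IsConvexDomain

lemma exists_intervalIntegral_norm_smoothedSum_sq_le {Ω : Set E2} {r K : ℝ}
    (h : IsConvexDomain Ω r) (hK : HasCapDiamBound Ω K) :
    ∃ C, 0 ≤ C ∧ ∀ (ε : ℝ) (S : Finset (ℤ × ℤ)) (a : ℝ), 0 < ε → ε ≤ 1 → 2 * ε ≤ r → 0 ∉ S →
      0 ≤ a → ε * (a + 1) ≤ 1 / 2 →
      ∫ t in a..(a + 1), ‖smoothedSum (planePt ⁻¹' Ω) ε S t‖ ^ 2 ≤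
        C * (ε⁻¹ * (3 + Real.log ε⁻¹)) := by
  have hr := h.r_pos
  have hK0 := hK.nonneg
  obtain ⟨B, hρ⟩ := h.exists_isLipschitzGauge_suppFn
  obtain ⟨C₁, hC₁, hright⟩ := hρ.exists_intervalIntegral_norm_sum_sq_le r
  obtain ⟨C₂, hC₂, hleft⟩ := hρ.comp_neg.exists_intervalIntegral_norm_sum_sq_le r
  refine ⟨3 / 16 ^ 2 * ((C₁ + C₂) * (12 * K) ^ 2 + (32 * (4 * K)) ^ 2 / r), by positivity, ?_⟩
  intro ε S a hε hε1 hεr hS ha hεa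
  choose! U V hU hV hUV using fun k (hk : k ∈ S) =>
    h.exists_isWavePacket hK hε hεr (ne_of_mem_of_not_mem hk hS)
  have hM : 1 ≤ ε⁻¹ := (one_le_inv₀ hε).2 hε1
  have hlog : 1 ≤ 3 + Real.log ε⁻¹ := by linarith [Real.log_nonneg hM]
  have hp : ∀ k ∈ S, smoothingCoeff ε k ≤ cutoff ε⁻¹ (supNatAbs k) := fun k hk =>
    one_div ε ▸ smoothingCoeff_le_cutoff hε (ne_of_mem_of_not_mem hk hS)
  have hIright := hright 1 S U (smoothingCoeff ε) _ _ abs_one hM hS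
    (fun k _ => smoothingCoeff_nonneg ε k) hp (fun k hk => by rw [one_mul]; exact hU k hk) a
  have hIleft := hleft (-1) S V (smoothingCoeff ε) _ _ (by simp) hM hS
    (fun k _ => smoothingCoeff_nonneg ε k) hp (fun k hk => by rw [neg_one_mul]; exact hV k hk) a
  have hm : (12 * K * (ε * √ε)) ^ 2 = (12 * K) ^ 2 * ε ^ 3 := by
    rw [mul_pow, mul_pow ε, Real.sq_sqrt hε.le]
    ring
  have hc : (32 * (4 * K * (ε ^ 2 / √r))) ^ 2 / ε = (32 * (4 * K)) ^ 2 / r * ε ^ 3 := by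
    simp only [mul_pow, div_pow, Real.sq_sqrt hr.le]
    field_simp
  rw [hm] at hIright hIleft
  calc _ ≤ 3 / (16 * ε ^ 2) ^ 2 * (_ + _ + (32 * (4 * K * (ε ^ 2 / √r))) ^ 2 / ε) :=
        intervalIntegral_norm_smoothedSum_sq_le hε hε1 (by positivity) ha hεa hS hU hV hUV
    _ ≤ 3 / (16 * ε ^ 2) ^ 2 * (C₁ * ((12 * K) ^ 2 * ε ^ 3 * (3 + Real.log ε⁻¹))
        + C₂ * ((12 * K) ^ 2 * ε ^ 3 * (3 + Real.log ε⁻¹))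
        + (32 * (4 * K)) ^ 2 / r * ε ^ 3 * (3 + Real.log ε⁻¹)) :=
        mul_le_mul_of_nonneg_left (add_le_add (add_le_add hIright hIleft)
          (hc.trans_le (le_mul_of_one_le_right (by positivity) hlog))) (by positivity)
    _ = _ := by field_simp

end IsConvexDomain

/-! ### The mean square of the lattice rest -/

lemma intervalIntegral_le_of_windows {F : ℝ → ℝ} (hF : Continuous F) (hF0 : ∀ t, 0 ≤ F t)
    {X a b h : ℝ} (hh : 0 ≤ h) (hb : a + h + 1 ≤ b)
    (hX : ∀ x, a ≤ x → x + 1 ≤ b → ∫ t in x..(x + 1), F t ≤ X) :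
    ∫ t in a..(a + h), F t ≤ (h + 1) * X := by
  have hi : ∀ x y, IntervalIntegrable F volume x y := fun x y => hF.intervalIntegrable x y
  have hX0 : 0 ≤ X := (intervalIntegral.integral_nonneg (by linarith) fun t _ => hF0 t).trans
    (hX a le_rfl (by linarith))
  have hceil : (⌈h⌉₊ : ℝ) < h + 1 := Nat.ceil_lt_add_one hh
  calc ∫ t in a..(a + h), F t ≤ ∫ t in a..(a + ⌈h⌉₊), F t :=
        intervalIntegral.integral_mono_interval le_rfl (by linarith)
          (by linarith [Nat.le_ceil h]) (.of_forall hF0) (hi _ _)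
    _ = ∑ i ∈ Finset.range ⌈h⌉₊, ∫ t in (a + (i : ℕ))..(a + (i + 1 : ℕ)), F t := by
        rw [intervalIntegral.sum_integral_adjacent_intervals (a := fun i : ℕ => a + i)
          fun _ _ => hi _ _, Nat.cast_zero, add_zero]
    _ ≤ ∑ _ ∈ Finset.range ⌈h⌉₊, X := by
        refine Finset.sum_le_sum fun i hin => ?_
        have hin' : (i : ℝ) + 1 ≤ ⌈h⌉₊ := by exact_mod_cast Finset.mem_range.1 hin
        rw [Nat.cast_add_one, ← add_assoc]
        exact hX _ (le_add_of_nonneg_right i.cast_nonneg) (by linarith)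
    _ = ⌈h⌉₊ * X := by simp
    _ ≤ (h + 1) * X := by gcongr

lemma half_le_log {R : ℝ} (hR : 2 ≤ R) : 1 / 2 ≤ Real.log R := by
  linarith [Real.log_le_log two_pos hR, Real.log_two_gt_d9]

lemma inv_mul_log_inv_le {R κ : ℝ} (hR : 2 ≤ R) (hκ : 0 < κ) (hκ1 : κ ≤ 1) :
    (κ / R)⁻¹ * (3 + Real.log (κ / R)⁻¹) ≤
      κ⁻¹ * (7 + 2 * Real.log κ⁻¹) * (R * Real.log R) := by
  have hlogR := half_le_log hR
  have hlogκ : 0 ≤ Real.log κ⁻¹ := Real.log_nonneg ((one_le_inv₀ hκ).2 hκ1)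
  have hlog : 3 + Real.log (κ / R)⁻¹ ≤ (7 + 2 * Real.log κ⁻¹) * Real.log R := by
    rw [inv_div, div_eq_mul_inv, Real.log_mul (by positivity) (by positivity)]
    nlinarith
  calc (κ / R)⁻¹ * (3 + Real.log (κ / R)⁻¹) ≤
        (κ / R)⁻¹ * ((7 + 2 * Real.log κ⁻¹) * Real.log R) := by gcongr
    _ = _ := by field_simp

namespace IsConvexDomain

variable {Ω : Set E2} {r K ε c : ℝ}

lemma exists_latticeRest_sq_le (h : IsConvexDomain Ω r) (hε : 0 < ε) (hε2 : ε ≤ 1 / 2)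
    (hc : c = ε / (r / 2)) (T : ℝ) :
    ∃ S : Finset (ℤ × ℤ), 0 ∉ S ∧ ∀ t, c < t → t + c ≤ T → c * (2 * t + c) ≤ 1 →
      latticeRest Ω t ^ 2 ≤ 3 * (‖smoothedSum (planePt ⁻¹' Ω) ε S (t + c)‖ ^ 2
        + ‖smoothedSum (planePt ⁻¹' Ω) ε S (t - c)‖ ^ 2
        + (1 + volume.real (planePt ⁻¹' Ω)) ^ 2) := by
  subst hc
  obtain ⟨S, hS, hle⟩ := h.preimage_planePt.exists_abs_dilateCount_sub_le hε hε2 T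
  refine ⟨S, hS, fun t ht htT hct => ?_⟩
  have hrest := hle t ht htT
  rw [← latticeRest_eq h.isOpen.measurableSet] at hrest
  refine le_trans ?_ (sq_add_add_le _ _ _)
  rw [← sq_abs (latticeRest Ω t)]
  refine pow_le_pow_left₀ (abs_nonneg _) (hrest.trans ?_) 2
  gcongr
  exact mul_le_of_le_one_left measureReal_nonneg hct

lemma integral_latticeRest_sq_le (h : IsConvexDomain Ω r) {R l X : ℝ} (hR : 2 ≤ R) (hl : 0 ≤ l)
    (hlR : l ≤ R) (hε : 0 < ε) (hε2 : ε ≤ 1 / 2) (hεR : 16 * (ε * R) ≤ r)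
    (hX : ∀ (S : Finset (ℤ × ℤ)) (x : ℝ), 0 ∉ S → 0 ≤ x → x + 1 ≤ 3 * R →
      ∫ t in x..(x + 1), ‖smoothedSum (planePt ⁻¹' Ω) ε S t‖ ^ 2 ≤ X) :
    ∫ t in R..(R + l), latticeRest Ω t ^ 2 ≤
      3 * ((l + 1) * X + (l + 1) * X + l * (1 + volume.real (planePt ⁻¹' Ω)) ^ 2) := by
  have hr := h.r_pos
  obtain ⟨c, hc⟩ : ∃ c, c = ε / (r / 2) := ⟨_, rfl⟩
  have hc0 : 0 < c := by rw [hc]; positivity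
  have hcR : c * R ≤ 1 / 8 := by
    rw [hc, div_mul_eq_mul_div, div_le_iff₀ (by positivity)]
    linarith
  have hc1 : c ≤ 1 / 16 := by nlinarith
  obtain ⟨S, hS, hrest⟩ := h.exists_latticeRest_sq_le hε hε2 hc (3 * R)
  have hcont : Continuous fun t => ‖smoothedSum (planePt ⁻¹' Ω) ε S t‖ ^ 2 :=
    (h.preimage_planePt.continuous_smoothedSum ε S).norm.pow 2
  have hshift : ∀ b, |b| ≤ c → ∫ t in R..(R + l),
      ‖smoothedSum (planePt ⁻¹' Ω) ε S (t + b)‖ ^ 2 ≤ (l + 1) * X := fun b hb => by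
    obtain ⟨hb₁, hb₂⟩ := abs_le.1 hb
    rw [intervalIntegral.integral_comp_add_right
      (fun t => ‖smoothedSum (planePt ⁻¹' Ω) ε S t‖ ^ 2) b, add_right_comm]
    exact intervalIntegral_le_of_windows hcont (fun t => sq_nonneg _) hl (b := 3 * R)
      (by linarith) fun x hx hx3 => hX S x hS (by linarith) hx3
  calc _ ≤ 3 * ((∫ t in R..(R + l), ‖smoothedSum (planePt ⁻¹' Ω) ε S (t + c)‖ ^ 2)
        + (∫ t in R..(R + l), ‖smoothedSum (planePt ⁻¹' Ω) ε S (t + -c)‖ ^ 2)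
        + (R + l - R) * (1 + volume.real (planePt ⁻¹' Ω)) ^ 2) :=
        intervalIntegral_le_mul_add (by linarith) (hcont.comp (continuous_add_const c))
          (hcont.comp (continuous_add_const (-c))) (fun t => sq_nonneg (latticeRest Ω t))
          fun t ht => hrest t (by linarith [ht.1]) (by linarith [ht.2]) (by nlinarith [ht.2])
    _ ≤ _ := by
        rw [add_sub_cancel_left]
        have hplus := hshift c (abs_of_pos hc0).le
        have hminus := hshift (-c) (by rw [abs_neg, abs_of_pos hc0])
        gcongr

/-- The smoothing scale `κ / R` keeps the smoothing error bounded, while `O(R)` frequencies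
matter. -/
lemma exists_integral_latticeRest_sq_le (h : IsConvexDomain Ω r) (hK : HasCapDiamBound Ω K) :
    ∃ C, 0 ≤ C ∧ ∀ R l : ℝ, 2 ≤ R → 0 ≤ l → l ≤ R →
      ∫ t in R..(R + l), latticeRest Ω t ^ 2 ≤ C * ((l + 1) * (R * Real.log R)) := by
  have hr := h.r_pos
  obtain ⟨C, hC, hwin⟩ := h.exists_intervalIntegral_norm_smoothedSum_sq_le hK
  obtain ⟨κ, hκ⟩ : ∃ κ, κ = min r 1 / 16 := ⟨_, rfl⟩
  have hκ0 : 0 < κ := by rw [hκ]; positivity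
  have hκr : κ ≤ r / 16 := by rw [hκ]; gcongr; exact min_le_left _ _
  have hκ1 : κ ≤ 1 / 16 := by rw [hκ]; gcongr; exact min_le_right _ _
  have hlogκ : 0 ≤ Real.log κ⁻¹ := Real.log_nonneg ((one_le_inv₀ hκ0).2 (by linarith))
  obtain ⟨A, hA⟩ : ∃ A, A = C * (κ⁻¹ * (7 + 2 * Real.log κ⁻¹)) := ⟨_, rfl⟩
  obtain ⟨Q, hQ⟩ : ∃ Q, Q = 1 + volume.real (planePt ⁻¹' Ω) := ⟨_, rfl⟩
  refine ⟨3 * (2 * A + Q ^ 2), by rw [hA]; positivity, fun R l hR hl hlR => ?_⟩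
  have hRlog : 1 ≤ R * Real.log R := by nlinarith [half_le_log hR]
  have hεR : κ / R * R = κ := div_mul_cancel₀ κ (by linarith)
  have hε : κ / R ≤ κ := div_le_self hκ0.le (by linarith)
  have hX : ∀ (S : Finset (ℤ × ℤ)) (x : ℝ), 0 ∉ S → 0 ≤ x → x + 1 ≤ 3 * R →
      ∫ t in x..(x + 1), ‖smoothedSum (planePt ⁻¹' Ω) (κ / R) S t‖ ^ 2 ≤ A * (R * Real.log R) :=
    fun S x hS hx hx3 => by
      have hscale : κ / R * (x + 1) ≤ κ / R * (3 * R) := by gcongr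
      refine (hwin _ S x (by positivity) (by linarith) (by linarith) hS hx (by linarith)).trans ?_
      rw [hA, mul_assoc C]
      exact mul_le_mul_of_nonneg_left (inv_mul_log_inv_le hR hκ0 (by linarith)) hC
  have hle := h.integral_latticeRest_sq_le hR hl hlR (by positivity) (by linarith)
    (by linarith) hX
  rw [← hQ] at hle
  have hlQ : l * Q ^ 2 ≤ (l + 1) * (Q ^ 2 * (R * Real.log R)) := by
    gcongr
    · linarith
    · exact le_mul_of_one_le_right (sq_nonneg Q) hRlog
  linarith

end IsConvexDomain

lemma meanSquare_le_of_integral_le {Ω : Set E2} {C R h X : ℝ} (hC : 0 ≤ C) (hX : 0 ≤ X)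
    (hh : 1 ≤ h) (hle : ∫ t in R..(R + h), latticeRest Ω t ^ 2 ≤ C * ((h + 1) * X)) :
    meanSquare Ω R h ≤ √(2 * C) * √X := by
  rw [meanSquare, ← Real.sqrt_mul (by positivity), one_div_mul_eq_div]
  refine Real.sqrt_le_sqrt ((div_le_iff₀ (by linarith)).2 (hle.trans ?_))
  calc C * ((h + 1) * X) ≤ C * (2 * h * X) := by
        gcongr
        linarith
    _ = 2 * C * X * h := by ring

/-- Theorem 1.3: if `Ω` is a bounded open convex planar domain containing the
origin, with curvature bounded below in the generalized sense
`sup_{θ∈S¹} sup_{δ>0} δ^{-1/2} μ(θ,δ) < ∞`, then `𝒢_Ω(R,h) ≤ C_Ω (R log R)^{1/2}` for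
`1 ≤ h ≤ R`, `R ≥ 2`. -/
theorem statement2 (Ω : Set E2) (hconv : Convex ℝ Ω) (hopen : IsOpen Ω)
    (hbdd : Bornology.IsBounded Ω) (h0 : (0 : E2) ∈ Ω) (hcurv : CurvBddBelow Ω) :
    ∃ C : ℝ, ∀ R h : ℝ, 2 ≤ R → 1 ≤ h → h ≤ R →
      meanSquare Ω R h ≤ C * Real.sqrt (R * Real.log R) := by
  obtain ⟨r, hr, hball⟩ := Metric.isOpen_iff.1 hopen 0 h0
  have hΩ : IsConvexDomain Ω r := ⟨hconv, hopen, hbdd, hr, hball⟩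
  obtain ⟨K, hK : HasCapDiamBound Ω K⟩ := hcurv
  obtain ⟨C, hC, hint⟩ := hΩ.exists_integral_latticeRest_sq_le hK
  refine ⟨√(2 * C), fun R h hR hh hhR => ?_⟩
  have hlog : 0 ≤ Real.log R := Real.log_nonneg (by linarith)
  exact meanSquare_le_of_integral_le hC (by positivity) hh (hint R h hR (by linarith) hhR)

end
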